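/- Let p be a prime, k an algebraically closed field of characteristic p, and let n ≥ 1, ℓ ≥ 1 with d := n − ℓ ≥ 2. Let f_1,…,f_ℓ ∈ k[[x_1,…,x_n]] be a regular sequence with each f_i lying in the square of the maximal ideal (the ideal generated by the variables), and set R := k[[x_1,…,x_n]]/(f_1,…,f_ℓ), with Hilbert–Kunz function HK_e(R) := dim_k k[[x_1,…,x_n]]/((f_1,…,f_ℓ) + (x_1^{p^e},…,x_n^{p^e})). Assume there is no ring isomorphism R ≅ k[[y_0,…,y_d]]/(Q_d). Then there exists F ∈ k[[y_0,…,y_d]] with F ≠ 0 and F in the square of the maximal ideal, such that there is no ring isomorphism k[[y_0,…,y_d]]/(F) ≅ k[[y_0,…,y_d]]/(Q_d), and the liminf as e → ∞ of HK_e(R)/p^{d·e} is at least the limsup as e → ∞ of dim_k( k[[y_0,…,y_d]]/((F) + (y_0^{p^e},…,y_d^{p^e})) )/p^{d·e}. (That is, every singular complete intersection not isomorphic to the A_1 singularity has Hilbert–Kunz multiplicity at least that of some non-A_1 singular hypersurface of the same dimension.) -/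

import Mathlib

/-- The defining equation `Q_d` of the `A₁` singularity:
`Q_d = y_0y_1 + y_2y_3 + ⋯ + y_{d−1}y_d` for `d` odd and
`Q_d = y_0y_1 + ⋯ + y_{d−2}y_{d−1} + y_d²` for `d` even, as a power series. -/
noncomputable def A1ps (k : Type*) [Field k] (d : ℕ) : MvPowerSeries (Fin (d + 1)) k :=
  (∑ i : Fin ((d + 1) / 2),
      (MvPowerSeries.X (⟨2 * i, by omega⟩ : Fin (d + 1)) :
          MvPowerSeries (Fin (d + 1)) k) *
        MvPowerSeries.X (⟨2 * i + 1, by omega⟩ : Fin (d + 1))) +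
    if Even d then
      (MvPowerSeries.X (⟨d, by omega⟩ : Fin (d + 1)) :
        MvPowerSeries (Fin (d + 1)) k) ^ 2
    else 0

/-!
For `ℓ = 1` take `F = f₁`. For `ℓ ≥ 2` take for `F` the `A₂` equation `y₀³ + Q(y₁, …, y_d)`. It is
not equivalent to `A₁`, because its quadratic part vanishes on, and is orthogonal to everything
from, a line of the tangent space, while the quadratic part of `A₁` has no such line.

The inequality `HK_e(A₂) ≤ HK_e(R)` holds for every `e`, by a degeneration inside the finite
dimensional algebra `k[[x]]/(x_i ^ q)`, `q = p ^ e`. Since `ℓ ≥ 2`, a linear change of coordinates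
makes `f₁` of weight at least `6`, where one coordinate `z₀` (dual to an isotropic vector of the
quadratic part of `f₁`) has weight `2`, `d` coordinates `z_i` have weight `3` and `ℓ - 1`
coordinates `x_j` have weight `4`; the form `A₂(z)` is homogeneous of weight `6`. The pencil
`P(s) = (1 - s)(A₂(z), x_j) + s(f₁, f_j)` joins `A₂` to `R`. Every element of weight at least `6` is
a first-order variation of the ideal `(A₂(z), x_j)` under a change of coordinates, so Newton
iteration produces coordinates depending on `s` in which `P(s)` is `(A₂(z), x_j)`, up to a high
power of `s`. By semicontinuity the fibres of this perturbed family over generic `s` have at most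
the dimension of the fibre of `P` at `s = 1`, and they map onto the truncation of `A₂`.

The normalized Hilbert–Kunz function of a hypersurface is monotone in `e` and that of a complete
intersection is bounded, so the inequality passes to the limit.
-/

section PowerSeries

open MvPowerSeries

variable {σ : Type*}

variable {k : Type*} [Field k]

theorem isUnit_mk_iff_constantCoeff_ne_zero {I : Ideal (MvPowerSeries σ k)} (hI : I ≠ ⊤)
    {f : MvPowerSeries σ k} : IsUnit (Ideal.Quotient.mk I f) ↔ constantCoeff f ≠ 0 := by
  have := Ideal.Quotient.nontrivial_iff.mpr hI
  have : IsLocalHom (Ideal.Quotient.mk I) :=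
    IsLocalHom.of_surjective _ Ideal.Quotient.mk_surjective
  rw [isUnit_map_iff, isUnit_iff_constantCoeff, isUnit_iff_ne_zero]

variable [Finite σ]

theorem mem_span_range_X_iff {R : Type*} [CommRing R] {f : MvPowerSeries σ R} :
    f ∈ Ideal.span (Set.range (X : σ → MvPowerSeries σ R)) ↔ constantCoeff f = 0 := by
  classical
  have := Fintype.ofFinite σ
  refine ⟨fun hf ↦ ?_, fun hf ↦ ?_⟩
  · have hle : Ideal.span (Set.range (X : σ → MvPowerSeries σ R)) ≤
        RingHom.ker (constantCoeff (σ := σ) (R := R)) := by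
      rw [Ideal.span_le]
      rintro _ ⟨i, rfl⟩
      simp
    exact hle hf
  -- Each nonzero exponent `m` is attributed to one index `c m` of its support.
  have exists_attribution (m : σ →₀ ℕ) : ∃ c : Option σ, (c = none → m = 0) ∧
      ∀ i, c = some i → m i ≠ 0 := by
    by_cases hm : m = 0
    · exact ⟨none, by simp [hm]⟩
    · obtain ⟨i, hi⟩ := DFunLike.ne_iff.mp hm
      exact ⟨some i, by simpa using hi⟩
  choose c hc₀ hc using exists_attribution
  let g : σ → MvPowerSeries σ R := fun i m ↦
    if c (m + .single i 1) = some i then coeff (m + .single i 1) f else 0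
  have coeff_g_mul_X : ∀ i m, coeff m (g i * X i) = if c m = some i then coeff m f else 0 := by
    intro i m
    rw [X_def, coeff_mul_monomial, mul_one]
    by_cases hle : Finsupp.single i 1 ≤ m
    · have : coeff (m - .single i 1) (g i) = g i (m - .single i 1) := rfl
      simp [hle, this, g, tsub_add_cancel_of_le hle]
    · rw [if_neg hle, if_neg fun h ↦ hle (by simpa [Nat.one_le_iff_ne_zero] using hc m i h)]
  have hfg : f = ∑ i, g i * X i := by
    ext m
    simp only [map_sum, coeff_g_mul_X]
    rcases h : c m with _ | i
    · simpa [hc₀ m h] using hf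
    · simp
  rw [hfg]
  exact Ideal.sum_mem _ fun i _ ↦ Ideal.mul_mem_left _ _ (Ideal.subset_span ⟨i, rfl⟩)

theorem exists_algHom_X_eq_of_isNilpotent {B : Type*} [CommRing B] [Algebra k B] {w : σ → B}
    (hw : ∀ i, IsNilpotent (w i)) : ∃ φ : MvPowerSeries σ k →ₐ[k] B, ∀ i, φ (X i) = w i := by
  let _ : UniformSpace k := ⊥
  let _ : UniformSpace B := ⊥
  have : DiscreteUniformity k := ⟨rfl⟩
  have : DiscreteUniformity B := ⟨rfl⟩
  have : ContinuousSMul k B := ⟨continuous_of_discreteTopology⟩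
  have hev : HasEval w := by
    refine ⟨fun i ↦ ?_, by simp [Filter.cofinite_eq_bot]⟩
    obtain ⟨N, hN⟩ := hw i
    refine tendsto_const_nhds.congr' ?_
    filter_upwards [Filter.eventually_ge_atTop N] with a ha
    exact (pow_eq_zero_of_le ha hN).symm
  exact ⟨MvPowerSeries.aeval hev, fun i ↦ by simp [MvPowerSeries.coe_aeval]⟩

theorem maximalIdeal_eq_span_range_X :
    IsLocalRing.maximalIdeal (MvPowerSeries σ k) = Ideal.span (Set.range X) := by
  ext f
  rw [mem_span_range_X_iff, IsLocalRing.mem_maximalIdeal, mem_nonunits_iff,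
    isUnit_iff_constantCoeff, isUnit_iff_ne_zero, not_not]

theorem exists_mem_adjoin_range_X_sub_mem_pow (N : ℕ) (f : MvPowerSeries σ k) :
    ∃ P ∈ Algebra.adjoin k (Set.range (X : σ → MvPowerSeries σ k)),
      f - P ∈ Ideal.span (Set.range (X : σ → MvPowerSeries σ k)) ^ N := by
  have := Fintype.ofFinite σ
  induction N generalizing f with
  | zero => exact ⟨0, Subalgebra.zero_mem _, by simp⟩
  | succ N ih =>
    obtain ⟨c, hc⟩ := Ideal.mem_span_range_iff_exists_fun.mp
      (mem_span_range_X_iff.mpr (show constantCoeff (f - C (constantCoeff f)) = 0 by simp))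
    choose P hP hcP using fun i ↦ ih (c i)
    refine ⟨C (constantCoeff f) + ∑ i, P i * X i, ?_, ?_⟩
    · exact Subalgebra.add_mem _ (Subalgebra.algebraMap_mem _ (constantCoeff f))
        (Subalgebra.sum_mem _ fun i _ ↦
          Subalgebra.mul_mem _ (hP i) (Algebra.subset_adjoin ⟨i, rfl⟩))
    · rw [← sub_sub, ← hc, ← Finset.sum_sub_distrib]
      refine Ideal.sum_mem _ fun i _ ↦ ?_
      rw [← sub_mul, pow_succ]
      exact Ideal.mul_mem_mul (hcP i) (Ideal.subset_span ⟨i, rfl⟩)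

variable {J : Ideal (MvPowerSeries σ k)}

theorem adjoin_range_mk_X_eq_top (hJ : ∀ i : σ, ∃ N, (X i : MvPowerSeries σ k) ^ N ∈ J) :
    Algebra.adjoin k (Set.range fun i : σ ↦ Ideal.Quotient.mkₐ k J (X i)) = ⊤ := by
  obtain ⟨N, hN⟩ : IsNilpotent ((Ideal.span (Set.range (X : σ → MvPowerSeries σ k))).map
      (Ideal.Quotient.mkₐ k J)) := by
    rw [Ideal.map_span, Ideal.FG.isNilpotent_iff_le_nilradical
      (Submodule.fg_span ((Set.finite_range _).image _)), Ideal.span_le]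
    rintro _ ⟨_, ⟨i, rfl⟩, rfl⟩
    obtain ⟨N, hN⟩ := hJ i
    exact ⟨N, by rw [← map_pow]; exact Ideal.Quotient.eq_zero_iff_mem.mpr hN⟩
  rw [eq_top_iff]
  rintro a -
  obtain ⟨f, rfl⟩ := Ideal.Quotient.mkₐ_surjective k J a
  obtain ⟨P, hP, hfP⟩ := exists_mem_adjoin_range_X_sub_mem_pow N f
  have hfP' := Ideal.mem_map_of_mem (Ideal.Quotient.mkₐ k J) hfP
  rw [Ideal.map_pow, hN, Ideal.zero_eq_bot, Ideal.mem_bot, map_sub, sub_eq_zero] at hfP'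
  have hP' : Ideal.Quotient.mkₐ k J P ∈ (Algebra.adjoin k (Set.range X)).map
      (Ideal.Quotient.mkₐ k J) := ⟨P, hP, rfl⟩
  rw [AlgHom.map_adjoin, ← Set.range_comp] at hP'
  rwa [hfP']

theorem moduleFinite_quotient_of_X_pow_mem
    (hJ : ∀ i : σ, ∃ N, (X i : MvPowerSeries σ k) ^ N ∈ J) :
    Module.Finite k (MvPowerSeries σ k ⧸ J) := by
  have hfg := fg_adjoin_of_finite (R := k)
    (Set.finite_range fun i : σ ↦ Ideal.Quotient.mkₐ k J (X i)) <| by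
      rintro _ ⟨i, rfl⟩
      obtain ⟨N, hN⟩ := hJ i
      refine IsIntegral.of_pow N.succ_pos ?_
      rw [pow_succ, ← map_pow, Ideal.Quotient.mkₐ_eq_mk, Ideal.Quotient.eq_zero_iff_mem.mpr hN,
        zero_mul]
      exact isIntegral_zero
  rw [adjoin_range_mk_X_eq_top hJ] at hfg
  exact ⟨by simpa using hfg⟩

end PowerSeries

section QuotientDimension

variable {k S : Type*} [Field k] [CommRing S] [Algebra k S]

theorem finrank_quotient_le_of_surjective {T : Type*} [CommRing T] [Algebra k T] {I : Ideal S}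
    {J : Ideal T} [Module.Finite k (S ⧸ I)] (φ : S →ₐ[k] T) (hφ : Function.Surjective φ)
    (hIJ : I ≤ J.comap φ) : Module.finrank k (T ⧸ J) ≤ Module.finrank k (S ⧸ I) :=
  LinearMap.finrank_le_finrank_of_surjective (f := (Ideal.quotientMapₐ J φ hIJ).toLinearMap)
    (Ideal.quotientMap_surjective (H := hIJ) hφ)

theorem finrank_quotient_le_of_le {I J : Ideal S} [Module.Finite k (S ⧸ I)] (hIJ : I ≤ J) :
    Module.finrank k (S ⧸ J) ≤ Module.finrank k (S ⧸ I) :=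
  finrank_quotient_le_of_surjective (AlgHom.id k S) Function.surjective_id hIJ

-- Right exactness of `S/(I, b) → S/(I, ab) → S/(I, a) → 0`, whose first map is `· * a`.
theorem finite_and_finrank_quotient_sup_span_mul_le (I : Ideal S) (a b : S)
    [Module.Finite k (S ⧸ (I ⊔ Ideal.span {a}))] [Module.Finite k (S ⧸ (I ⊔ Ideal.span {b}))] :
    Module.Finite k (S ⧸ (I ⊔ Ideal.span {a * b})) ∧
      Module.finrank k (S ⧸ (I ⊔ Ideal.span {a * b})) ≤
        Module.finrank k (S ⧸ (I ⊔ Ideal.span {a})) +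
          Module.finrank k (S ⧸ (I ⊔ Ideal.span {b})) := by
  set J := I ⊔ Ideal.span {a * b}
  have hJa : J ≤ I ⊔ Ideal.span {a} :=
    sup_le_sup_left (Ideal.span_singleton_le_span_singleton.mpr (dvd_mul_right a b)) _
  have mem_J {y : S} (hy : y ∈ I) (c : S) : y + c * (a * b) ∈ J :=
    Ideal.add_mem _ (Ideal.mem_sup_left hy)
      (Ideal.mem_sup_right (Ideal.mul_mem_left _ _ (Ideal.mem_span_singleton_self _)))
  let π : (S ⧸ J) →ₗ[k] S ⧸ (I ⊔ Ideal.span {a}) := (Ideal.Quotient.factorₐ k hJa).toLinearMap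
  let mulA : (S ⧸ (I ⊔ Ideal.span {b})) →ₗ[k] S ⧸ J :=
    Submodule.liftQ ((I ⊔ Ideal.span {b}).restrictScalars k)
      ((Ideal.Quotient.mkₐ k J).toLinearMap ∘ₗ LinearMap.mulLeft k a) <| by
        intro x hx
        obtain ⟨y, hy, z, hz, rfl⟩ := Submodule.mem_sup.mp (show x ∈ I ⊔ Ideal.span {b} from hx)
        obtain ⟨c, rfl⟩ := Ideal.mem_span_singleton'.mp hz
        refine Ideal.Quotient.eq_zero_iff_mem.mpr ?_
        convert! mem_J (I.mul_mem_left a hy) c using 1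
        simp only [LinearMap.mulLeft_apply]
        ring
  have hπ : Function.Surjective π := Ideal.Quotient.factor_surjective hJa
  have ker_le_range : LinearMap.ker π ≤ LinearMap.range mulA := by
    intro x hx
    obtain ⟨x, rfl⟩ := Ideal.Quotient.mk_surjective x
    obtain ⟨y, hy, z, hz, rfl⟩ := Submodule.mem_sup.mp
      (show x ∈ I ⊔ Ideal.span {a} from Ideal.Quotient.eq_zero_iff_mem.mp hx)
    obtain ⟨c, rfl⟩ := Ideal.mem_span_singleton'.mp hz
    refine ⟨Ideal.Quotient.mk _ c, (Ideal.Quotient.mk_eq_mk_iff_sub_mem (a * c) _).mpr ?_⟩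
    convert! mem_J (neg_mem hy) 0 using 1
    ring
  have : Module.Finite k (LinearMap.ker π) := Submodule.finiteDimensional_of_le ker_le_range
  have : Module.Finite k ((S ⧸ J) ⧸ LinearMap.ker π) :=
    Module.Finite.equiv (LinearMap.quotKerEquivOfSurjective π hπ).symm
  have : Module.Finite k (S ⧸ J) := Module.Finite.of_submodule_quotient (LinearMap.ker π)
  have rank_nullity := LinearMap.finrank_range_add_finrank_ker π
  rw [LinearMap.range_eq_top.mpr hπ, finrank_top] at rank_nullity
  have := Submodule.finrank_mono ker_le_range
  have := LinearMap.finrank_range_le mulA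
  exact ⟨inferInstance, by omega⟩

theorem finite_and_finrank_quotient_sup_span_pow_le (I : Ideal S) (a : S)
    [Module.Finite k (S ⧸ (I ⊔ Ideal.span {a}))] (m : ℕ) :
    Module.Finite k (S ⧸ (I ⊔ Ideal.span {a ^ m})) ∧
      Module.finrank k (S ⧸ (I ⊔ Ideal.span {a ^ m})) ≤
        m * Module.finrank k (S ⧸ (I ⊔ Ideal.span {a})) := by
  induction m with
  | zero =>
    have : Subsingleton (S ⧸ (I ⊔ Ideal.span {a ^ 0})) :=
      Ideal.Quotient.subsingleton_iff.mpr (by simp [Ideal.span_singleton_one])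
    exact ⟨inferInstance, by simp [Module.finrank_zero_of_subsingleton]⟩
  | succ m ih =>
    obtain ⟨_, hm⟩ := ih
    rw [pow_succ, add_mul, one_mul]
    obtain ⟨hfin, hle⟩ := finite_and_finrank_quotient_sup_span_mul_le (k := k) I (a ^ m) a
    exact ⟨hfin, hle.trans (Nat.add_le_add_right hm _)⟩

theorem finite_and_finrank_quotient_sup_span_image_pow_le (m : ℕ) (s : Finset S) (I : Ideal S)
    (hs : Module.Finite k (S ⧸ (I ⊔ Ideal.span (s : Set S)))) :
    Module.Finite k (S ⧸ (I ⊔ Ideal.span ((· ^ m) '' (s : Set S)))) ∧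
      Module.finrank k (S ⧸ (I ⊔ Ideal.span ((· ^ m) '' (s : Set S)))) ≤
        m ^ s.card * Module.finrank k (S ⧸ (I ⊔ Ideal.span (s : Set S))) := by
  classical
  induction s using Finset.induction_on generalizing I with
  | empty =>
    rw [Finset.coe_empty] at hs ⊢
    rw [Set.image_empty, Finset.card_empty, pow_zero, one_mul]
    exact ⟨hs, le_rfl⟩
  | insert a s ha ih =>
    have sup_span_insert (b : S) (t : Set S) :
        I ⊔ Ideal.span (insert b t) = I ⊔ Ideal.span {b} ⊔ Ideal.span t := by
      rw [sup_assoc, Ideal.span_insert]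
    rw [Finset.coe_insert, sup_span_insert] at hs
    rw [Finset.coe_insert, Set.image_insert_eq, sup_span_insert, sup_span_insert]
    obtain ⟨hfin, hle⟩ := ih (I ⊔ Ideal.span {a}) hs
    rw [sup_right_comm] at hfin hle
    obtain ⟨hfin', hle'⟩ := finite_and_finrank_quotient_sup_span_pow_le (k := k)
      (I ⊔ Ideal.span ((· ^ m) '' (s : Set S))) a m
    rw [sup_right_comm, Finset.card_insert_of_notMem ha, pow_succ', mul_assoc]
    exact ⟨hfin', hle'.trans (Nat.mul_le_mul_left _ hle)⟩

end QuotientDimension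

section HilbertKunz

open MvPowerSeries

variable {σ k : Type*} [Field k]

/-- The ideal `(x_i ^ q : i ∈ σ)` of `k[[x_i : i ∈ σ]]`; for `q = p ^ e` this is the `e`-th
Frobenius power of the maximal ideal. -/
noncomputable def varPowIdeal (σ k : Type*) [Field k] (q : ℕ) : Ideal (MvPowerSeries σ k) :=
  Ideal.span (Set.range fun i : σ ↦ (X i : MvPowerSeries σ k) ^ q)

/-- The dimension of `k[[x]] / (I + (x_i ^ q))`. The value of the Hilbert–Kunz function of
`k[[x]] / I` at `e` is the case `q = p ^ e`. -/
noncomputable def hilbertKunz (I : Ideal (MvPowerSeries σ k)) (q : ℕ) : ℕ :=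
  Module.finrank k (MvPowerSeries σ k ⧸ (I ⊔ varPowIdeal σ k q))

theorem hilbertKunz_span (s : Set (MvPowerSeries σ k)) (q : ℕ) :
    hilbertKunz (Ideal.span s) q = Module.finrank k (MvPowerSeries σ k ⧸
      Ideal.span (s ∪ Set.range fun i : σ ↦ (X i : MvPowerSeries σ k) ^ q)) := by
  rw [Ideal.span_union]
  rfl

theorem X_pow_mem_varPowIdeal (q : ℕ) (i : σ) :
    (X i : MvPowerSeries σ k) ^ q ∈ varPowIdeal σ k q :=
  Ideal.subset_span ⟨i, rfl⟩

instance finite_quotient_sup_varPowIdeal [Finite σ] (I : Ideal (MvPowerSeries σ k)) (q : ℕ) :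
    Module.Finite k (MvPowerSeries σ k ⧸ (I ⊔ varPowIdeal σ k q)) :=
  moduleFinite_quotient_of_X_pow_mem fun i ↦
    ⟨q, Ideal.mem_sup_right (X_pow_mem_varPowIdeal q i)⟩

end HilbertKunz

section Frobenius

open MvPowerSeries

variable {σ R : Type*} [CommRing R] (p : ℕ) [ExpChar R p]

theorem coeff_smul_pow_expChar (a : MvPowerSeries σ R) (m : σ →₀ ℕ) :
    coeff (p • m) (a ^ p) = coeff m a ^ p := by
  have hp := (expChar_pos R p).ne'
  rw [← map_frobenius_expand p hp, coeff_map, coeff_expand_smul, frobenius_def]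

theorem coeff_pow_expChar_of_not_dvd (a : MvPowerSeries σ R) {m : σ →₀ ℕ} {i : σ}
    (hi : ¬p ∣ m i) : coeff m (a ^ p) = 0 := by
  have hp := (expChar_pos R p).ne'
  rw [← map_frobenius_expand p hp, coeff_map, coeff_expand_of_not_dvd p hp _ hi, map_zero]

variable {p}

theorem exists_smul_of_add_eq_smul_add {x y m r : σ →₀ ℕ} (hr : ∀ i, r i < p)
    (hxy : x + y = p • m + r) (hx : ∀ i, p ∣ x i) :
    ∃ x' y', x' + y' = m ∧ p • x' = x ∧ p • y' + r = y := by
  obtain ⟨x', rfl⟩ : ∃ x', p • x' = x :=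
    ⟨x.mapRange (· / p) (Nat.zero_div p), Finsupp.ext fun i ↦ Nat.mul_div_cancel' (hx i)⟩
  have hle : x' ≤ m := fun i ↦ by
    have hi : p * x' i + y i = p * m i + r i := DFunLike.congr_fun hxy i
    have : p * x' i < p * (m i + 1) := by linarith [hr i]
    exact Nat.lt_succ_iff.mp (Nat.lt_of_mul_lt_mul_left this)
  obtain ⟨y', rfl⟩ := exists_add_of_le hle
  refine ⟨x', y', rfl, rfl, ?_⟩
  rw [smul_add, add_assoc] at hxy
  exact (add_left_cancel hxy).symm

theorem smul_add_eq_iff_of_lt {m r s : σ →₀ ℕ} (hs : ∀ i, s i < p) :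
    p • m + r = s ↔ m = 0 ∧ r = s := by
  refine ⟨fun h ↦ ?_, by rintro ⟨rfl, rfl⟩; simp⟩
  have hm : m = 0 := Finsupp.ext fun i ↦ by
    have hi : p * m i + r i = s i := DFunLike.congr_fun h i
    exact Nat.lt_one_iff.mp (Nat.lt_of_mul_lt_mul_left (a := p) (by linarith [hs i]))
  simpa [hm] using h

variable (p) [PerfectRing R p]

/-- Over a perfect ring `R`, the coordinate of a power series at the monomial `x ^ r` with
respect to the basis of `R[[x]]` over its subring of `p`-th powers formed by the monomials with
all exponents `< p`; it is normalised by taking the `p`-th root. -/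
noncomputable def frobCoord (r : σ →₀ ℕ) : MvPowerSeries σ R →+ MvPowerSeries σ R where
  toFun g m := (frobeniusEquiv R p).symm (coeff (p • m + r) g)
  map_zero' := by
    ext _
    exact map_zero (frobeniusEquiv R p).symm
  map_add' a b := by
    ext m
    exact map_add (frobeniusEquiv R p).symm _ _

theorem coeff_frobCoord (r : σ →₀ ℕ) (g : MvPowerSeries σ R) (m : σ →₀ ℕ) :
    coeff m (frobCoord p r g) = (frobeniusEquiv R p).symm (coeff (p • m + r) g) := rfl

theorem frobCoord_pow_mul {r : σ →₀ ℕ} (hr : ∀ i, r i < p) (a g : MvPowerSeries σ R) :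
    frobCoord p r (a ^ p * g) = a * frobCoord p r g := by
  classical
  have hp := (expChar_pos R p).ne'
  ext m
  rw [coeff_frobCoord, coeff_mul, coeff_mul, map_sum]
  refine (Finset.sum_of_injOn (fun x ↦ (p • x.1, p • x.2 + r)) ?_ ?_ ?_ ?_).symm
  · rintro ⟨x, y⟩ - ⟨x', y'⟩ - h
    obtain ⟨hx, hy⟩ := Prod.mk.inj h
    exact Prod.ext (smul_right_injective _ hp hx)
      (smul_right_injective _ hp (add_right_cancel hy))
  · rintro ⟨x, y⟩ hxy
    simp only [Finset.mem_coe, Finset.HasAntidiagonal.mem_antidiagonal] at hxy ⊢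
    rw [← hxy, smul_add, add_assoc]
  · rintro ⟨x, y⟩ hxy hnot
    by_cases hdvd : ∀ i, p ∣ x i
    · obtain ⟨x', y', hm, hx', hy'⟩ :=
        exists_smul_of_add_eq_smul_add hr (Finset.HasAntidiagonal.mem_antidiagonal.mp hxy) hdvd
      exact absurd ⟨(x', y'), by simpa using hm, Prod.ext hx' hy'⟩ hnot
    · obtain ⟨i, hi⟩ := not_forall.mp hdvd
      rw [coeff_pow_expChar_of_not_dvd p a hi, zero_mul, map_zero]
  · rintro ⟨x, y⟩ -
    rw [map_mul, coeff_smul_pow_expChar, coeff_frobCoord, ← frobenius_def, ← frobeniusEquiv_apply,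
      RingEquiv.symm_apply_apply]

theorem frobCoord_monomial [DecidableEq σ] {r s : σ →₀ ℕ} (hs : ∀ i, s i < p) :
    frobCoord p r (monomial s (1 : R)) = if r = s then 1 else 0 := by
  ext m
  simp only [coeff_frobCoord, coeff_monomial, smul_add_eq_iff_of_lt hs]
  by_cases hrs : r = s <;> by_cases hm : m = 0 <;> simp [hrs, hm, coeff_one]

theorem frobCoord_mem_of_mem_span_image_pow {J : Ideal (MvPowerSeries σ R)} {r : σ →₀ ℕ}
    (hr : ∀ i, r i < p) {x : MvPowerSeries σ R}
    (hx : x ∈ Ideal.span ((· ^ p) '' (J : Set (MvPowerSeries σ R)))) :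
    frobCoord p r x ∈ J := by
  induction hx using Submodule.closure_induction with
  | zero => simp
  | add x y _ _ hx hy => rw [map_add]; exact J.add_mem hx hy
  | smul_mem a _ hx =>
    obtain ⟨y, hy, rfl⟩ := hx
    rw [smul_eq_mul, mul_comm, frobCoord_pow_mul p hr]
    exact J.mul_mem_right _ hy

end Frobenius

section FrobeniusFlatness

open MvPowerSeries

variable {σ k : Type*} [Field k] (p : ℕ) [ExpChar k p] [PerfectRing k p]

theorem linearIndependent_mk_pow_mul_monomial {J : Ideal (MvPowerSeries σ k)} {ι : Type*}
    [Finite ι] [Finite σ] {β : ι → MvPowerSeries σ k}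
    (hβ : LinearIndependent k fun i ↦ Ideal.Quotient.mkₐ k J (β i)) :
    LinearIndependent k fun x : (σ → Fin p) × ι ↦
      Ideal.Quotient.mkₐ k (Ideal.span ((· ^ p) '' (J : Set (MvPowerSeries σ k))))
        (β x.2 ^ p * monomial (Finsupp.equivFunOnFinite.symm fun i ↦ (x.1 i : ℕ)) 1) := by
  classical
  have := Fintype.ofFinite ι
  have := Fintype.ofFinite σ
  set J' := Ideal.span ((· ^ p) '' (J : Set (MvPowerSeries σ k)))
  let ex (r : σ → Fin p) : σ →₀ ℕ := Finsupp.equivFunOnFinite.symm fun i ↦ (r i : ℕ)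
  have ex_lt (r i) : ex r i < p := (r i).2
  have ex_inj : Function.Injective ex := fun r s h ↦
    funext fun i ↦ Fin.ext (DFunLike.congr_fun h i)
  let root := (frobeniusEquiv k p).symm
  have root_pow (a : k) : root a ^ p = a := (frobeniusEquiv k p).apply_symm_apply a
  rw [Fintype.linearIndependent_iff] at hβ ⊢
  rintro c hc ⟨r, i⟩
  have relation : ∑ x, (root (c x) • β x.2) ^ p * monomial (ex x.1) (1 : k) ∈ J' := by
    rw [← Ideal.Quotient.eq_zero_iff_mem, ← Ideal.Quotient.mkₐ_eq_mk k, map_sum, ← hc]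
    refine Finset.sum_congr rfl fun x _ ↦ ?_
    rw [smul_pow, root_pow, smul_mul_assoc, map_smul]
  have coordinate : ∑ i, root (c (r, i)) • β i ∈ J := by
    have h := frobCoord_mem_of_mem_span_image_pow p (ex_lt r) relation
    simp only [map_sum, frobCoord_pow_mul p (ex_lt r), frobCoord_monomial p (ex_lt _),
      ex_inj.eq_iff, Fintype.sum_prod_type] at h
    rwa [Finset.sum_eq_single r (fun s _ hs ↦ by simp [hs.symm]) (by simp),
      Finset.sum_congr rfl fun i _ ↦ by rw [if_pos rfl, mul_one]] at h
  have root_eq_zero := hβ (fun i ↦ root (c (r, i))) (by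
    simp_rw [← map_smul, ← map_sum]
    exact Ideal.Quotient.eq_zero_iff_mem.mpr coordinate) i
  simpa [root] using root_eq_zero

theorem pow_mul_finrank_quotient_le {n : ℕ} (J : Ideal (MvPowerSeries (Fin n) k))
    [Module.Finite k (MvPowerSeries (Fin n) k ⧸ J)]
    [Module.Finite k (MvPowerSeries (Fin n) k ⧸
      Ideal.span ((· ^ p) '' (J : Set (MvPowerSeries (Fin n) k))))] :
    p ^ n * Module.finrank k (MvPowerSeries (Fin n) k ⧸ J) ≤
      Module.finrank k (MvPowerSeries (Fin n) k ⧸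
        Ideal.span ((· ^ p) '' (J : Set (MvPowerSeries (Fin n) k)))) := by
  let b := Module.finBasis k (MvPowerSeries (Fin n) k ⧸ J)
  choose β hβ using fun i ↦ Ideal.Quotient.mkₐ_surjective k J (b i)
  have h := linearIndependent_mk_pow_mul_monomial p (J := J) (β := β)
    (by simpa only [hβ] using b.linearIndependent)
  simpa using h.fintype_card_le_finrank

theorem pow_mul_hilbertKunz_le_hilbertKunz_mul {d : ℕ} (F : MvPowerSeries (Fin (d + 1)) k)
    (q : ℕ) : p ^ d * hilbertKunz (Ideal.span {F}) q ≤ hilbertKunz (Ideal.span {F}) (q * p) := by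
  set V := varPowIdeal (Fin (d + 1)) k (q * p)
  set J := Ideal.span {F} ⊔ varPowIdeal (Fin (d + 1)) k q with hJ
  set J' := Ideal.span ((· ^ p) '' (J : Set (MvPowerSeries (Fin (d + 1)) k)))
  have pow_mem {y : MvPowerSeries (Fin (d + 1)) k} (hy : y ∈ J) : y ^ p ∈ J' :=
    Ideal.subset_span ⟨y, hy, rfl⟩
  have le_J' : V ⊔ Ideal.span {F ^ p} ≤ J' := by
    refine sup_le (Ideal.span_le.mpr ?_) (Ideal.span_le.mpr ?_)
    · rintro _ ⟨i, rfl⟩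
      simp only [pow_mul]
      exact pow_mem (Ideal.mem_sup_right (X_pow_mem_varPowIdeal q i))
    · rintro _ rfl
      exact pow_mem (Ideal.mem_sup_left (Ideal.mem_span_singleton_self F))
  have : Module.Finite k (MvPowerSeries (Fin (d + 1)) k ⧸ J') :=
    moduleFinite_quotient_of_X_pow_mem fun i ↦
      ⟨q * p, le_J' (Ideal.mem_sup_left (X_pow_mem_varPowIdeal _ i))⟩
  have : Module.Finite k (MvPowerSeries (Fin (d + 1)) k ⧸ (V ⊔ Ideal.span {F})) := by
    rw [sup_comm]
    infer_instance
  obtain ⟨_, hpow⟩ := finite_and_finrank_quotient_sup_span_pow_le (k := k) V F p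
  refine Nat.le_of_mul_le_mul_left ?_ (expChar_pos k p)
  calc p * (p ^ d * hilbertKunz (Ideal.span {F}) q)
      = p ^ (d + 1) * Module.finrank k (MvPowerSeries (Fin (d + 1)) k ⧸ J) := by
        rw [hilbertKunz, hJ, pow_succ', mul_assoc]
    _ ≤ Module.finrank k (MvPowerSeries (Fin (d + 1)) k ⧸ J') := pow_mul_finrank_quotient_le p J
    _ ≤ Module.finrank k (MvPowerSeries (Fin (d + 1)) k ⧸ (V ⊔ Ideal.span {F ^ p})) :=
        finrank_quotient_le_of_le le_J'
    _ ≤ p * hilbertKunz (Ideal.span {F}) (q * p) := by rwa [hilbertKunz, sup_comm (Ideal.span {F})]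

end FrobeniusFlatness

section Boundedness

open MvPowerSeries IsLocalRing

theorem exists_finset_card_le_radical_span_eq_maximalIdeal {R : Type*} [CommRing R]
    [IsLocalRing R] [IsNoetherianRing R] {d : ℕ} (hd : ringKrullDim R ≤ d) :
    ∃ s : Finset R, s.card ≤ d ∧ (Ideal.span (s : Set R)).radical = maximalIdeal R := by
  obtain ⟨s, hs, hcard⟩ :=
    Ideal.exists_finset_card_eq_height_of_isNoetherianRing (maximalIdeal R)
  refine ⟨s, ?_, le_antisymm ((Ideal.IsPrime.radical_le_iff hs.1.1).mpr hs.1.2) ?_⟩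
  · rw [← maximalIdeal_height_eq_ringKrullDim, ← hcard] at hd
    exact_mod_cast hd
  · rw [Ideal.radical_eq_sInf]
    exact le_sInf fun P ⟨hsP, hP⟩ ↦ hs.2 ⟨hP, hsP⟩ (le_maximalIdeal hP.ne_top)

theorem exists_finset_subset_maximalIdeal_le_radical_sup_span {R : Type*} [CommRing R]
    [IsLocalRing R] [IsNoetherianRing R] {I : Ideal R} (hI : I ≠ ⊤) {d : ℕ}
    (hd : ringKrullDim (R ⧸ I) ≤ d) :
    ∃ t : Finset R, t.card ≤ d ∧ (t : Set R) ⊆ maximalIdeal R ∧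
      maximalIdeal R ≤ (I ⊔ Ideal.span (t : Set R)).radical := by
  classical
  have := Ideal.Quotient.nontrivial_iff.mpr hI
  have mk_surj := Ideal.Quotient.mk_surjective (I := I)
  have : IsLocalRing (R ⧸ I) := IsLocalRing.of_surjective' (Ideal.Quotient.mk I) mk_surj
  have : IsLocalHom (Ideal.Quotient.mk I) := IsLocalHom.of_surjective _ mk_surj
  obtain ⟨s, hs, hrad⟩ := exists_finset_card_le_radical_span_eq_maximalIdeal hd
  let lift := Function.surjInv mk_surj
  have mk_lift (x) : Ideal.Quotient.mk I (lift x) = x := Function.surjInv_eq mk_surj x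
  refine ⟨s.image lift, Finset.card_image_le.trans hs, ?_, ?_⟩
  · intro g hg
    obtain ⟨x, hx, rfl⟩ := Finset.mem_image.mp hg
    rw [SetLike.mem_coe, ← maximalIdeal_comap (Ideal.Quotient.mk I), Ideal.mem_comap, mk_lift,
      ← hrad]
    exact Ideal.le_radical (Ideal.subset_span hx)
  · have hmap : (Ideal.span (s.image lift : Set R)).map (Ideal.Quotient.mk I) = Ideal.span s := by
      rw [Ideal.map_span, Finset.coe_image, Set.image_image]
      simp only [mk_lift, Set.image_id']
    rw [← maximalIdeal_comap (Ideal.Quotient.mk I), ← hrad, ← hmap, Ideal.comap_radical,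
      Ideal.comap_map_of_surjective' _ mk_surj, Ideal.mk_ker, sup_comm]

variable {σ k : Type*} [Field k] (p : ℕ) [Fact p.Prime] [CharP k p]

theorem pow_char_pow_mem_of_mem_span {B : Type*} [CommRing B] [Algebra k B] {S : Set B}
    {J : Ideal B} {e : ℕ} (hS : ∀ s ∈ S, s ^ p ^ e ∈ J) {x : B} (hx : x ∈ Ideal.span S) :
    x ^ p ^ e ∈ J := by
  nontriviality B
  have : CharP B p := charP_of_injective_algebraMap (algebraMap k B).injective p
  have hle : Ideal.span S ≤ J.comap (iterateFrobenius B p e) := Ideal.span_le.mpr hS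
  exact hle hx

theorem pow_mem_varPowIdeal {g : MvPowerSeries σ k}
    (hg : g ∈ Ideal.span (Set.range (X : σ → MvPowerSeries σ k))) (e : ℕ) :
    g ^ p ^ e ∈ varPowIdeal σ k (p ^ e) :=
  pow_char_pow_mem_of_mem_span (k := k) p
    (Set.forall_mem_range.mpr fun i ↦ X_pow_mem_varPowIdeal _ i) hg

theorem exists_hilbertKunz_le_mul_pow [Finite σ] {I : Ideal (MvPowerSeries σ k)} (hI : I ≠ ⊤)
    {d : ℕ} (hd : ringKrullDim (MvPowerSeries σ k ⧸ I) ≤ d) :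
    ∃ C, ∀ e, hilbertKunz I (p ^ e) ≤ C * p ^ (d * e) := by
  obtain ⟨t, htd, htm, hmt⟩ := exists_finset_subset_maximalIdeal_le_radical_sup_span hI hd
  rw [maximalIdeal_eq_span_range_X] at htm hmt
  have hfin : Module.Finite k (MvPowerSeries σ k ⧸ (I ⊔ Ideal.span (t : Set _))) :=
    moduleFinite_quotient_of_X_pow_mem fun i ↦ hmt (Ideal.subset_span ⟨i, rfl⟩)
  refine ⟨Module.finrank k (MvPowerSeries σ k ⧸ (I ⊔ Ideal.span (t : Set _))), fun e ↦ ?_⟩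
  obtain ⟨_, hle⟩ := finite_and_finrank_quotient_sup_span_image_pow_le (p ^ e) t I hfin
  have image_le : Ideal.span ((· ^ p ^ e) '' (t : Set _)) ≤ varPowIdeal σ k (p ^ e) := by
    rw [Ideal.span_le]
    rintro _ ⟨g, hg, rfl⟩
    exact pow_mem_varPowIdeal p (htm hg) e
  refine (finrank_quotient_le_of_le (sup_le_sup_left image_le I)).trans (hle.trans ?_)
  rw [mul_comm, ← pow_mul, mul_comm e]
  gcongr
  exact (Fact.out : p.Prime).one_le

theorem ringKrullDim_mvPowerSeries_le {n : ℕ} : ringKrullDim (MvPowerSeries (Fin n) k) ≤ n := by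
  refine (ringKrullDim_le_spanFinrank_maximalIdeal _).trans ?_
  rw [maximalIdeal_eq_span_range_X]
  have h := Submodule.spanFinrank_span_le_ncard_of_finite (R := MvPowerSeries (Fin n) k)
    (Set.finite_range (X : Fin n → MvPowerSeries (Fin n) k))
  rw [← Set.image_univ] at h ⊢
  exact_mod_cast h.trans ((Set.ncard_image_le Set.finite_univ).trans (by simp))

variable {d ℓ : ℕ} {f : Fin ℓ → MvPowerSeries (Fin (d + ℓ)) k}

theorem exists_hilbertKunz_le_mul_pow_of_isRegular
    (hf : RingTheory.Sequence.IsRegular (MvPowerSeries (Fin (d + ℓ)) k) (List.ofFn f)) :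
    ∃ C, ∀ e, hilbertKunz (Ideal.span (Set.range f)) (p ^ e) ≤ C * p ^ (d * e) := by
  have ofList_eq : Ideal.ofList (List.ofFn f) = Ideal.span (Set.range f) := by
    simp [Ideal.ofList, List.mem_ofFn, Set.range, eq_comm]
  refine exists_hilbertKunz_le_mul_pow p (fun htop ↦ hf.top_ne_smul ?_) ?_
  · simp [ofList_eq, htop]
  · have hdim := ringKrullDim_add_length_eq_ringKrullDim_of_isRegular _ hf
    rw [ofList_eq, List.length_ofFn] at hdim
    have hle := hdim.trans_le ringKrullDim_mvPowerSeries_le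
    rw [Nat.cast_add] at hle
    exact ENat.WithBot.add_le_add_natCast_right_iff.mp hle

end Boundedness

section Limits

open Filter

theorem limsup_le_liminf_of_monotone_of_le {a b : ℕ → ℝ} {C : ℝ} (ha : Monotone a) (hab : a ≤ b)
    (hb : ∀ e, b e ≤ C) : limsup a atTop ≤ liminf b atTop := by
  have hbdd : BddAbove (Set.range a) := ⟨C, by rintro _ ⟨e, rfl⟩; exact (hab e).trans (hb e)⟩
  rw [(tendsto_atTop_ciSup ha hbdd).limsup_eq]
  refine ciSup_le fun m ↦ le_liminf_of_le
    (IsCoboundedUnder.of_frequently_le (a := C) (Frequently.of_forall hb)) ?_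
  filter_upwards [eventually_ge_atTop m] with e he
  exact (ha he).trans (hab e)

variable {k : Type*} [Field k] (p : ℕ) [Fact p.Prime] [CharP k p]

theorem monotone_hilbertKunz_div_pow [PerfectRing k p] {d : ℕ}
    (F : MvPowerSeries (Fin (d + 1)) k) :
    Monotone fun e : ℕ ↦ (hilbertKunz (Ideal.span {F}) (p ^ e) : ℝ) / (p : ℝ) ^ (d * e) := by
  have hp : 0 < (p : ℝ) := mod_cast (Fact.out : p.Prime).pos
  refine monotone_nat_of_le_succ fun e ↦ ?_
  have h : (p : ℝ) ^ d * hilbertKunz (Ideal.span {F}) (p ^ e) ≤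
      hilbertKunz (Ideal.span {F}) (p ^ (e + 1)) := by
    exact_mod_cast pow_mul_hilbertKunz_le_hilbertKunz_mul p F (p ^ e)
  rw [Nat.mul_succ, pow_add _ (d * e), div_le_div_iff₀ (by positivity) (by positivity)]
  nlinarith [mul_le_mul_of_nonneg_right h (pow_nonneg hp.le (d * e))]

theorem limsup_hilbertKunz_le_liminf_hilbertKunz [PerfectRing k p] {d ℓ : ℕ}
    {F : MvPowerSeries (Fin (d + 1)) k} {f : Fin ℓ → MvPowerSeries (Fin (d + ℓ)) k}
    (hf : RingTheory.Sequence.IsRegular (MvPowerSeries (Fin (d + ℓ)) k) (List.ofFn f))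
    (hle : ∀ e, hilbertKunz (Ideal.span {F}) (p ^ e) ≤
      hilbertKunz (Ideal.span (Set.range f)) (p ^ e)) :
    limsup (fun e ↦ (hilbertKunz (Ideal.span {F}) (p ^ e) : ℝ) / (p : ℝ) ^ (d * e)) atTop ≤
      liminf (fun e ↦ (hilbertKunz (Ideal.span (Set.range f)) (p ^ e) : ℝ) / (p : ℝ) ^ (d * e))
        atTop := by
  have hp : 0 < (p : ℝ) := mod_cast (Fact.out : p.Prime).pos
  obtain ⟨C, hC⟩ := exists_hilbertKunz_le_mul_pow_of_isRegular p hf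
  refine limsup_le_liminf_of_monotone_of_le (C := C) (monotone_hilbertKunz_div_pow p F)
    (fun e ↦ ?_) fun e ↦ ?_
  · have := hle e
    dsimp only
    gcongr
  · rw [div_le_iff₀ (by positivity)]
    exact_mod_cast hC e

end Limits

section HyperbolicForm

open QuadraticMap

variable {R : Type*} [CommRing R] {m : ℕ}

/-- The quadratic form `w₀w₁ + w₂w₃ + ⋯` in `m` variables, ending with the square of the last
variable if `m` is odd. The equation of the `A₁` singularity is its value at the variables. -/
def hyperbolicForm (R : Type*) [CommRing R] (m : ℕ) : QuadraticForm R (Fin m → R) :=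
  ∑ i : Fin (m / 2), proj ⟨2 * i, by omega⟩ ⟨2 * i + 1, by omega⟩ +
    if h : Odd m then proj ⟨m - 1, by have := h.pos; omega⟩ ⟨m - 1, by have := h.pos; omega⟩ else 0

theorem hyperbolicForm_apply (w : Fin m → R) :
    hyperbolicForm R m w =
      ∑ i : Fin (m / 2), w ⟨2 * i, by omega⟩ * w ⟨2 * i + 1, by omega⟩ +
        if h : Odd m then w ⟨m - 1, by have := h.pos; omega⟩ ^ 2 else 0 := by
  rw [hyperbolicForm, _root_.add_apply, _root_.sum_apply]
  split_ifs <;> simp [pow_two]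

theorem A1ps_eq_hyperbolicForm (k : Type*) [Field k] (d : ℕ) :
    A1ps k d = hyperbolicForm (MvPowerSeries (Fin (d + 1)) k) (d + 1) MvPowerSeries.X := by
  rw [A1ps, hyperbolicForm_apply]
  by_cases hd : Even d <;> simp [Nat.odd_add_one, hd]

theorem map_hyperbolicForm {S F : Type*} [CommRing S] [FunLike F R S] [RingHomClass F R S] (φ : F)
    (w : Fin m → R) : φ (hyperbolicForm R m w) = hyperbolicForm S m (φ ∘ w) := by
  simp only [hyperbolicForm_apply, map_add, map_sum, map_mul]
  split_ifs <;> simp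

theorem hyperbolicForm_mem_sq {I : Ideal R} {w : Fin m → R} (hw : ∀ i, w i ∈ I) :
    hyperbolicForm R m w ∈ I ^ 2 := by
  rw [hyperbolicForm_apply]
  refine add_mem (sum_mem fun i _ ↦ ?_) ?_
  · rw [pow_two]
    exact Ideal.mul_mem_mul (hw _) (hw _)
  · split_ifs
    exacts [Ideal.pow_mem_pow (hw _) 2, zero_mem _]

theorem polar_hyperbolicForm (v w : Fin m → R) :
    polar (hyperbolicForm R m) v w =
      ∑ i : Fin (m / 2), (v ⟨2 * i, by omega⟩ * w ⟨2 * i + 1, by omega⟩ +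
        v ⟨2 * i + 1, by omega⟩ * w ⟨2 * i, by omega⟩) +
        if h : Odd m then
          2 * v ⟨m - 1, by have := h.pos; omega⟩ * w ⟨m - 1, by have := h.pos; omega⟩ else 0 := by
  simp only [polar, hyperbolicForm_apply, Pi.add_apply, add_sub_add_comm,
    ← Finset.sum_sub_distrib]
  congr 1
  · exact Finset.sum_congr rfl fun i _ ↦ by ring
  · split_ifs <;> ring

theorem polar_hyperbolicForm_mem_mul {I J : Ideal R} {v w : Fin m → R} (hv : ∀ i, v i ∈ I)
    (hw : ∀ i, w i ∈ J) : polar (hyperbolicForm R m) v w ∈ I * J := by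
  rw [polar_hyperbolicForm]
  refine add_mem (sum_mem fun i _ ↦ ?_) ?_
  · exact add_mem (Ideal.mul_mem_mul (hv _) (hw _)) (Ideal.mul_mem_mul (hv _) (hw _))
  · split_ifs
    exacts [Ideal.mul_mem_mul (I.mul_mem_left _ (hv _)) (hw _), zero_mem _]

theorem polar_hyperbolicForm_single_even (w : Fin m → R) (a : R) (i : Fin (m / 2)) :
    polar (hyperbolicForm R m) w (Pi.single ⟨2 * i, by omega⟩ a) = w ⟨2 * i + 1, by omega⟩ * a := by
  have not_last (h : Odd m) : m - 1 ≠ 2 * i := by obtain ⟨j, hj⟩ := h; omega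
  rw [polar_hyperbolicForm, Finset.sum_eq_single i]
  · split_ifs with h
    · simp [not_last h]
    · simp
  · intro j _ hj
    have : (j : ℕ) ≠ i := Fin.val_ne_of_ne hj
    have : 2 * (j : ℕ) + 1 ≠ 2 * i := by omega
    simp [*]
  · simp

theorem polar_hyperbolicForm_single_odd (w : Fin m → R) (a : R) (i : Fin (m / 2)) :
    polar (hyperbolicForm R m) w (Pi.single ⟨2 * i + 1, by omega⟩ a) = w ⟨2 * i, by omega⟩ * a := by
  have not_last (h : Odd m) : m - 1 ≠ 2 * i + 1 := by obtain ⟨j, hj⟩ := h; omega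
  rw [polar_hyperbolicForm, Finset.sum_eq_single i]
  · split_ifs with h
    · simp [not_last h]
    · simp
  · intro j _ hj
    have : (j : ℕ) ≠ i := Fin.val_ne_of_ne hj
    have : 2 * (j : ℕ) ≠ 2 * i + 1 := by omega
    simp [*]
  · simp

theorem polar_hyperbolicForm_single_last (hm : Odd m) (w : Fin m → R) (a : R) {i : Fin m}
    (hi : (i : ℕ) = m - 1) :
    polar (hyperbolicForm R m) w (Pi.single i a) = 2 * w i * a := by
  obtain ⟨i, him⟩ := i
  obtain rfl : i = m - 1 := hi
  rw [polar_hyperbolicForm, dif_pos hm, Finset.sum_eq_zero, zero_add, Pi.single_eq_same]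
  intro j _
  have : 2 * (j : ℕ) + 1 ≠ m - 1 := by obtain ⟨l, hl⟩ := hm; omega
  have : 2 * (j : ℕ) ≠ m - 1 := by omega
  simp [*]

theorem exists_polar_hyperbolicForm_single_eq {i : Fin m} (hi : ¬(Odd m ∧ (i : ℕ) = m - 1)) :
    ∃ j, ∀ (w : Fin m → R) (a : R), polar (hyperbolicForm R m) w (Pi.single j a) = w i * a := by
  obtain ⟨i, him⟩ := i
  simp only [Nat.odd_iff] at hi
  obtain ⟨j, rfl | rfl⟩ := Nat.even_or_odd' i
  · exact ⟨⟨2 * j + 1, by omega⟩, fun w a ↦ polar_hyperbolicForm_single_odd w a ⟨j, by omega⟩⟩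
  · exact ⟨⟨2 * j, by omega⟩, fun w a ↦ polar_hyperbolicForm_single_even w a ⟨j, by omega⟩⟩

theorem eq_zero_of_hyperbolicForm_eq_zero_of_polar_eq_zero [IsReduced R] {v : Fin m → R}
    (hv : hyperbolicForm R m v = 0) (hpolar : ∀ w, polar (hyperbolicForm R m) v w = 0) :
    v = 0 := by
  have eq_zero {i : Fin m} (hi : ¬(Odd m ∧ (i : ℕ) = m - 1)) : v i = 0 := by
    obtain ⟨j, hj⟩ := exists_polar_hyperbolicForm_single_eq (R := R) hi
    simpa [hj] using hpolar (Pi.single j 1)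
  ext i
  by_cases hi : Odd m ∧ (i : ℕ) = m - 1
  · rw [hyperbolicForm_apply, dif_pos hi.1, Finset.sum_eq_zero, zero_add] at hv
    · rw [Pi.zero_apply, ← eq_zero_of_pow_eq_zero hv]
      exact congrArg v (Fin.ext hi.2)
    · intro j _
      rw [eq_zero (i := ⟨2 * j, by omega⟩) (by simp only; omega), zero_mul]
  · exact eq_zero hi

end HyperbolicForm

section Cusp

variable {R : Type*} [CommRing R] {d : ℕ}

/-- The equation `w₀³ + Q(w₁, …, w_d)` of the `A₂` singularity of dimension `d`, where `Q` is the
hyperbolic form. -/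
def cuspForm (w : Fin (d + 1) → R) : R :=
  hyperbolicForm R d (Fin.tail w) + w 0 ^ 3

theorem map_cuspForm {S F : Type*} [CommRing S] [FunLike F R S] [RingHomClass F R S] (φ : F)
    (w : Fin (d + 1) → R) : φ (cuspForm w) = cuspForm (φ ∘ w) := by
  simp only [cuspForm, map_add, map_hyperbolicForm, map_pow, Function.comp_apply]
  rfl

theorem cuspForm_mem_sq {I : Ideal R} {w : Fin (d + 1) → R} (hw : ∀ i, w i ∈ I) :
    cuspForm w ∈ I ^ 2 :=
  add_mem (hyperbolicForm_mem_sq fun _ ↦ hw _)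
    (Ideal.pow_le_pow_right (by norm_num) (Ideal.pow_mem_pow (hw 0) 3))

theorem cuspForm_X_ne_zero {k : Type*} [Field k] :
    cuspForm (MvPowerSeries.X : Fin (d + 1) → MvPowerSeries (Fin (d + 1)) k) ≠ 0 := by
  intro h
  have coe_eq : ((cuspForm MvPolynomial.X : MvPolynomial (Fin (d + 1)) k) :
      MvPowerSeries (Fin (d + 1)) k) = (0 : MvPolynomial (Fin (d + 1)) k) := by
    rw [← MvPolynomial.coeToMvPowerSeries.ringHom_apply, map_cuspForm]
    simpa [Function.comp_def] using h
  have eval_eq := congrArg (MvPolynomial.eval (Pi.single 0 1))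
    (MvPolynomial.coe_injective _ _ coe_eq)
  rw [map_cuspForm, cuspForm, show Fin.tail (MvPolynomial.eval (Pi.single 0 (1 : k)) ∘
    (MvPolynomial.X : Fin (d + 1) → _)) = 0 by ext; simp [Fin.tail]] at eval_eq
  simp at eval_eq

end Cusp

section CuspNotA1

open MvPowerSeries

variable {σ τ k : Type*} [Field k]

local notation "𝔪" => Ideal.span (Set.range X)

theorem exists_arc [Finite σ] (u : σ → k) : ∃ ψ : MvPowerSeries σ k →ₐ[k] PowerSeries k,
    (∀ i, ψ (X i) = u i • PowerSeries.X) ∧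
      ∀ N, ∀ f ∈ (𝔪 ^ N : Ideal (MvPowerSeries σ k)), PowerSeries.X ^ N ∣ ψ f := by
  let a : σ → MvPowerSeries Unit k := fun i ↦ u i • X ()
  have ha : HasSubst a := hasSubst_of_constantCoeff_zero fun i ↦ by simp [a]
  have hX (i : σ) : substAlgHom ha (X i : MvPowerSeries σ k) = u i • PowerSeries.X := by
    rw [substAlgHom_X]
    rfl
  refine ⟨substAlgHom ha, hX, fun N f hf ↦ ?_⟩
  have hle : (𝔪 : Ideal (MvPowerSeries σ k)) ≤
      (Ideal.span {(PowerSeries.X : PowerSeries k)}).comap (substAlgHom (R := k) ha) := by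
    rw [Ideal.span_le]
    rintro _ ⟨i, rfl⟩
    rw [SetLike.mem_coe, Ideal.mem_comap, hX]
    exact Submodule.smul_of_tower_mem _ _ (Ideal.mem_span_singleton_self _)
  have := (Ideal.le_comap_pow _ N) (Ideal.pow_right_mono hle N hf)
  rwa [Ideal.mem_comap, Ideal.span_singleton_pow, Ideal.mem_span_singleton] at this

variable [Fintype σ]

theorem exists_sub_sum_smul_X_mem_sq {f : MvPowerSeries σ k} (hf : constantCoeff f = 0) :
    ∃ c : σ → k, f - ∑ i, c i • X i ∈ (𝔪 ^ 2 : Ideal (MvPowerSeries σ k)) := by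
  obtain ⟨a, rfl⟩ := Ideal.mem_span_range_iff_exists_fun.mp (mem_span_range_X_iff.mpr hf)
  refine ⟨fun i ↦ constantCoeff (a i), ?_⟩
  rw [← Finset.sum_sub_distrib]
  refine sum_mem fun i _ ↦ ?_
  rw [smul_eq_C_mul, ← sub_mul, sq]
  exact Ideal.mul_mem_mul (mem_span_range_X_iff.mpr (by simp)) (Ideal.subset_span ⟨i, rfl⟩)

theorem eq_zero_of_sum_smul_X_mem_sq {c : σ → k}
    (hc : ∑ i, c i • X i ∈ (𝔪 ^ 2 : Ideal (MvPowerSeries σ k))) : c = 0 := by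
  classical
  ext i
  obtain ⟨ψ, hX, hψ⟩ := exists_arc (Pi.single i (1 : k))
  have hdvd := PowerSeries.X_pow_dvd_iff.mp (hψ 2 _ hc) 1 one_lt_two
  simpa [hX, Pi.single_apply] using hdvd

theorem map_constantCoeff_mul_eq_one [Fintype τ] [DecidableEq τ] {w : σ → MvPowerSeries τ k}
    {M : Matrix σ τ k} {b : Matrix τ σ (MvPowerSeries τ k)} (hw : ∀ i, constantCoeff (w i) = 0)
    (hM : ∀ i, w i - ∑ j, M i j • X j ∈ (𝔪 ^ 2 : Ideal (MvPowerSeries τ k)))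
    (hb : ∀ j, X j - ∑ i, b j i * w i ∈ (𝔪 ^ 2 : Ideal (MvPowerSeries τ k))) :
    b.map constantCoeff * M = 1 := by
  have mul_sub_mem (j : τ) (i : σ) : b j i * w i - constantCoeff (b j i) • ∑ l, M i l • X l ∈
      (𝔪 ^ 2 : Ideal (MvPowerSeries τ k)) := by
    have hmul : (b j i - C (constantCoeff (b j i))) * w i ∈
        (𝔪 ^ 2 : Ideal (MvPowerSeries τ k)) := by
      rw [sq]
      exact Ideal.mul_mem_mul (mem_span_range_X_iff.mpr (by simp))
        (mem_span_range_X_iff.mpr (hw i))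
    convert! add_mem hmul (Ideal.mul_mem_left _ (C (constantCoeff (b j i))) (hM i)) using 1
    rw [smul_eq_C_mul]
    ring
  ext j l
  have hsum := add_mem (hb j) (sum_mem fun i (_ : i ∈ Finset.univ) ↦ mul_sub_mem j i)
  rw [Finset.sum_sub_distrib, sub_add_sub_cancel] at hsum
  have hlin : X j - ∑ i, constantCoeff (b j i) • ∑ l, M i l • X l =
      ∑ l, ((1 : Matrix τ τ k) j l - (b.map constantCoeff * M) j l) • X (R := k) l := by
    simp only [sub_smul, Finset.sum_sub_distrib, Matrix.mul_apply, Matrix.one_apply, ite_smul,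
      one_smul, zero_smul, Finset.sum_ite_eq, Finset.mem_univ, if_true, Finset.sum_smul,
      Finset.smul_sum, Matrix.map_apply, mul_smul]
    rw [Finset.sum_comm]
  rw [hlin] at hsum
  exact (sub_eq_zero.mp (congrFun (eq_zero_of_sum_smul_X_mem_sq hsum) l)).symm

-- An isomorphism of quotients by ideals contained in `𝔪 ^ 2` induces one of cotangent spaces.
theorem exists_linearization_of_ringEquiv [Fintype τ] [DecidableEq τ]
    {I : Ideal (MvPowerSeries σ k)} {J : Ideal (MvPowerSeries τ k)} (hI : I ≠ ⊤) (hJ : J ≤ 𝔪 ^ 2)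
    (Φ : (MvPowerSeries σ k ⧸ I) ≃+* (MvPowerSeries τ k ⧸ J)) :
    ∃ (w : σ → MvPowerSeries τ k) (M : Matrix σ τ k) (N : Matrix τ σ k),
      (∀ i, Ideal.Quotient.mk J (w i) = Φ (Ideal.Quotient.mk I (X i))) ∧
      (∀ i, w i - ∑ j, M i j • X j ∈ (𝔪 ^ 2 : Ideal (MvPowerSeries τ k))) ∧ N * M = 1 := by
  have hJ' : J ≠ ⊤ := by
    have := Ideal.Quotient.nontrivial_iff.mpr hI
    exact Ideal.Quotient.nontrivial_iff.mp Φ.symm.toEquiv.nontrivial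
  choose w hw using fun i ↦ Ideal.Quotient.mk_surjective (Φ (Ideal.Quotient.mk I (X i)))
  choose g hg using fun j ↦ Ideal.Quotient.mk_surjective (Φ.symm (Ideal.Quotient.mk J (X j)))
  have hw0 (i : σ) : constantCoeff (w i) = 0 := by
    rw [← not_ne_iff, ← isUnit_mk_iff_constantCoeff_ne_zero hJ', hw, MulEquiv.isUnit_map,
      isUnit_mk_iff_constantCoeff_ne_zero hI]
    simp
  have hg0 (j : τ) : constantCoeff (g j) = 0 := by
    rw [← not_ne_iff, ← isUnit_mk_iff_constantCoeff_ne_zero hI, hg, MulEquiv.isUnit_map,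
      isUnit_mk_iff_constantCoeff_ne_zero hJ']
    simp
  choose M hM using fun i ↦ exists_sub_sum_smul_X_mem_sq (hw0 i)
  choose a ha using fun j ↦
    Ideal.mem_span_range_iff_exists_fun.mp (mem_span_range_X_iff.mpr (hg0 j))
  choose b hb using fun j i ↦ Ideal.Quotient.mk_surjective (Φ (Ideal.Quotient.mk I (a j i)))
  refine ⟨w, M, Matrix.map b constantCoeff, hw, hM,
    map_constantCoeff_mul_eq_one hw0 hM fun j ↦ hJ ?_⟩
  rw [← Ideal.Quotient.mk_eq_mk_iff_sub_mem, ← Φ.apply_symm_apply (Ideal.Quotient.mk J (X j)),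
    ← hg, ← ha]
  simp only [map_sum, map_mul, hw, hb]

theorem hyperbolicForm_mulVec_eq {m d : ℕ} {w : Fin m → MvPowerSeries (Fin (d + 1)) k}
    {M : Matrix (Fin m) (Fin (d + 1)) k}
    (hM : ∀ i, w i - ∑ j, M i j • X j ∈ (𝔪 ^ 2 : Ideal (MvPowerSeries (Fin (d + 1)) k)))
    {a : MvPowerSeries (Fin (d + 1)) k} (ha : hyperbolicForm _ m w = a * cuspForm X)
    (u : Fin (d + 1) → k) : hyperbolicForm k m (M.mulVec u) =
      constantCoeff a * hyperbolicForm k d (Fin.tail u) := by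
  obtain ⟨ψ, hX, hψ⟩ := exists_arc u
  obtain ⟨W, hW, W_zero⟩ : ∃ W, ψ ∘ w = PowerSeries.X (R := k) • W ∧
      PowerSeries.constantCoeff ∘ W = M.mulVec u := by
    choose r hr using fun i ↦ hψ 2 _ (hM i)
    refine ⟨fun i ↦ PowerSeries.C (M.mulVec u i) + PowerSeries.X * r i, funext fun i ↦ ?_,
      funext fun i ↦ by simp⟩
    have ψ_linear : ψ (∑ j, M i j • X j) = PowerSeries.X * PowerSeries.C (M.mulVec u i) := by
      simp only [map_sum, map_smul, hX, Matrix.mulVec, dotProduct, PowerSeries.smul_eq_C_mul,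
        Finset.mul_sum, map_mul]
      exact Finset.sum_congr rfl fun j _ ↦ by ring
    have := hr i
    rw [map_sub, ψ_linear, sub_eq_iff_eq_add] at this
    simp only [Function.comp_apply, this, Pi.smul_apply, smul_eq_mul]
    ring
  have constantCoeff_ψ : PowerSeries.constantCoeff (ψ a) = constantCoeff a := by
    have := hψ 1 (a - algebraMap k _ (constantCoeff a)) (by
      rw [pow_one, mem_span_range_X_iff]
      simp [MvPowerSeries.algebraMap_apply])
    rw [pow_one, PowerSeries.X_dvd_iff, map_sub, AlgHom.commutes, map_sub, sub_eq_zero] at this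
    simpa [PowerSeries.algebraMap_apply] using this
  have ψ_tail : Fin.tail (ψ ∘ X) = PowerSeries.X (R := k) • (PowerSeries.C ∘ Fin.tail u) := by
    ext1 i
    simp [Fin.tail, hX, PowerSeries.smul_eq_C_mul, mul_comm]
  have key := congrArg ψ ha
  rw [map_hyperbolicForm, map_mul, map_cuspForm, cuspForm, hW, ψ_tail, Function.comp_apply,
    hX, PowerSeries.smul_eq_C_mul, QuadraticMap.map_smul, QuadraticMap.map_smul,
    ← map_hyperbolicForm PowerSeries.C, smul_eq_mul, smul_eq_mul] at key
  have cancelled : hyperbolicForm _ m W = ψ a * (PowerSeries.C (hyperbolicForm k d (Fin.tail u)) +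
      PowerSeries.C (u 0) ^ 3 * PowerSeries.X) :=
    mul_left_cancel₀ (pow_ne_zero 2 (PowerSeries.X_ne_zero (R := k))) (by linear_combination key)
  have := congrArg PowerSeries.constantCoeff cancelled
  rw [map_hyperbolicForm, W_zero] at this
  simpa [constantCoeff_ψ] using this

theorem not_nonempty_quotient_cuspForm_ringEquiv_quotient_A1ps (d : ℕ) :
    ¬Nonempty ((MvPowerSeries (Fin (d + 1)) k ⧸
        Ideal.span {(cuspForm X : MvPowerSeries (Fin (d + 1)) k)}) ≃+*
      (MvPowerSeries (Fin (d + 1)) k ⧸ Ideal.span {A1ps k d})) := by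
  rintro ⟨Φ⟩
  have A1_ne_top : Ideal.span {A1ps k d} ≠ ⊤ := by
    rw [Ne, Ideal.span_singleton_eq_top, isUnit_iff_constantCoeff, A1ps_eq_hyperbolicForm,
      map_hyperbolicForm, show constantCoeff ∘ X = (0 : Fin (d + 1) → k) by ext; simp]
    simp
  have cusp_le : Ideal.span {(cuspForm X : MvPowerSeries (Fin (d + 1)) k)} ≤ 𝔪 ^ 2 :=
    (Ideal.span_singleton_le_iff_mem _).mpr
      (cuspForm_mem_sq fun i ↦ Ideal.subset_span ⟨i, rfl⟩)
  obtain ⟨w, M, N, hw, hM, hNM⟩ := exists_linearization_of_ringEquiv A1_ne_top cusp_le Φ.symm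
  obtain ⟨a, ha⟩ : ∃ a, a * cuspForm X = hyperbolicForm _ (d + 1) w := by
    rw [← Ideal.mem_span_singleton', ← Ideal.Quotient.eq_zero_iff_mem, map_hyperbolicForm]
    rw [show Ideal.Quotient.mk (Ideal.span {cuspForm X}) ∘ w =
      Φ.symm ∘ Ideal.Quotient.mk (Ideal.span {A1ps k d}) ∘ X from funext hw,
      ← map_hyperbolicForm, ← map_hyperbolicForm, ← A1ps_eq_hyperbolicForm,
      Ideal.Quotient.eq_zero_iff_mem.mpr (Ideal.mem_span_singleton_self _), map_zero]
  have hQ := hyperbolicForm_mulVec_eq hM ha.symm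
  let e₀ : Fin (d + 1) → k := Pi.single 0 1
  have tail_e₀ : Fin.tail e₀ = 0 := by ext i; simp [e₀, Fin.tail]
  have hv : M.mulVec e₀ = 0 := by
    refine eq_zero_of_hyperbolicForm_eq_zero_of_polar_eq_zero (by simp [hQ, tail_e₀]) fun v ↦ ?_
    have hMN : M * N = 1 := mul_eq_one_comm.mp hNM
    have tail_add : Fin.tail (e₀ + N.mulVec v) = Fin.tail (N.mulVec v) := by
      ext i; simp [e₀, Fin.tail]
    rw [← Matrix.one_mulVec v, ← hMN, ← Matrix.mulVec_mulVec, QuadraticMap.polar,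
      ← Matrix.mulVec_add, hQ, hQ, hQ, tail_add, tail_e₀]
    simp
  have he₀ : e₀ = 0 := by
    rw [← Matrix.one_mulVec e₀, ← hNM, ← Matrix.mulVec_mulVec, hv, Matrix.mulVec_zero]
  simpa [e₀] using congrFun he₀ 0

end CuspNotA1

section TruncatedPowerSeries

open MvPowerSeries

/-- The truncated power series ring `k[[x_i : i ∈ σ]] / (x_i ^ q)`. -/
abbrev PowTrunc (σ k : Type*) [Field k] (q : ℕ) : Type _ :=
  MvPowerSeries σ k ⧸ varPowIdeal σ k q

/-- The class of the variable `x_i` in the truncated power series ring. -/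
noncomputable def truncX {σ : Type*} (k : Type*) [Field k] (q : ℕ) (i : σ) : PowTrunc σ k q :=
  Ideal.Quotient.mkₐ k (varPowIdeal σ k q) (X i)

variable {σ k : Type*} [Field k] {q : ℕ}

theorem truncX_pow (i : σ) : truncX k q i ^ q = 0 := by
  rw [truncX, ← map_pow, Ideal.Quotient.mkₐ_eq_mk, Ideal.Quotient.eq_zero_iff_mem]
  exact X_pow_mem_varPowIdeal q i

theorem hilbertKunz_eq_finrank_quotient_map (I : Ideal (MvPowerSeries σ k)) :
    hilbertKunz I q = Module.finrank k
      (PowTrunc σ k q ⧸ I.map (Ideal.Quotient.mkₐ k (varPowIdeal σ k q))) := by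
  rw [hilbertKunz, sup_comm]
  exact (DoubleQuot.quotQuotEquivQuotSupₐ k _ I).toLinearEquiv.finrank_eq.symm

variable [Finite σ]

theorem adjoin_range_truncX : Algebra.adjoin k (Set.range (truncX (σ := σ) k q)) = ⊤ :=
  adjoin_range_mk_X_eq_top fun i ↦ ⟨q, X_pow_mem_varPowIdeal q i⟩

instance finite_powTrunc : Module.Finite k (PowTrunc σ k q) :=
  moduleFinite_quotient_of_X_pow_mem fun i ↦ ⟨q, X_pow_mem_varPowIdeal q i⟩

theorem exists_algHom_truncX_eq {B : Type*} [CommRing B] [Algebra k B] {w : σ → B}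
    (hw : ∀ i, w i ^ q = 0) : ∃ φ : PowTrunc σ k q →ₐ[k] B, ∀ i, φ (truncX k q i) = w i := by
  obtain ⟨φ, hφ⟩ := exists_algHom_X_eq_of_isNilpotent (k := k) fun i ↦ ⟨q, hw i⟩
  have hker : varPowIdeal σ k q ≤ RingHom.ker φ := by
    rw [varPowIdeal, Ideal.span_le]
    rintro _ ⟨i, rfl⟩
    simp [RingHom.mem_ker, hφ, hw]
  exact ⟨Ideal.Quotient.liftₐ _ φ hker, hφ⟩

theorem surjective_of_truncX_mem_range {B : Type*} [CommRing B] [Algebra k B]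
    (φ : B →ₐ[k] PowTrunc σ k q) (hφ : ∀ i, truncX k q i ∈ φ.range) : Function.Surjective φ := by
  rw [← AlgHom.range_eq_top, eq_top_iff, ← adjoin_range_truncX, Algebra.adjoin_le_iff]
  rintro _ ⟨i, rfl⟩
  exact hφ i

end TruncatedPowerSeries

section QuadraticPart

open MvPowerSeries

variable {σ k : Type*} [Field k] [Fintype σ]

local notation "𝔪" => Ideal.span (Set.range X)

theorem exists_sub_sum_smul_X_mul_X_mem_cube {f : MvPowerSeries σ k}
    (hf : f ∈ (𝔪 ^ 2 : Ideal (MvPowerSeries σ k))) :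
    ∃ α : Matrix σ σ k,
      f - ∑ i, ∑ j, α i j • (X i * X j) ∈ (𝔪 ^ 3 : Ideal (MvPowerSeries σ k)) := by
  rw [sq] at hf
  induction hf using Submodule.mul_induction_on' with
  | mem_mul_mem g hg h hh =>
    obtain ⟨a, ha⟩ := exists_sub_sum_smul_X_mem_sq (mem_span_range_X_iff.mp hg)
    obtain ⟨b, hb⟩ := exists_sub_sum_smul_X_mem_sq (mem_span_range_X_iff.mp hh)
    refine ⟨Matrix.vecMulVec a b, ?_⟩
    have hlin : ∑ i, a i • X i ∈ (𝔪 : Ideal (MvPowerSeries σ k)) :=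
      sum_mem fun i _ ↦ Submodule.smul_of_tower_mem _ _ (Ideal.subset_span ⟨i, rfl⟩)
    have hprod : ∑ i, ∑ j, Matrix.vecMulVec a b i j • (X i * X j) =
        (∑ i, a i • X (R := k) i) * ∑ j, b j • X j := by
      simp only [Finset.sum_mul_sum, Matrix.vecMulVec_apply, smul_mul_smul_comm]
    rw [hprod, pow_succ]
    convert! add_mem (Ideal.mul_mem_mul ha hh) (Ideal.mul_mem_mul hb hlin) using 1
    ring
  | add g _ h _ hg hh =>
    obtain ⟨α, hα⟩ := hg
    obtain ⟨β, hβ⟩ := hh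
    refine ⟨α + β, ?_⟩
    convert! add_mem hα hβ using 1
    simp only [Matrix.add_apply, add_smul, Finset.sum_add_distrib]
    ring

end QuadraticPart

section IsotropicBasis

variable {k V : Type*} [Field k] [AddCommGroup V] [Module k V]

theorem exists_ne_zero_apply_self_eq_zero [IsAlgClosed k] (hV : 1 < Module.finrank k V)
    (B : LinearMap.BilinForm k V) : ∃ v, v ≠ 0 ∧ B v v = 0 := by
  have := Module.nontrivial_of_finrank_pos (zero_lt_one.trans hV)
  obtain ⟨u, hu⟩ := exists_ne (0 : V)
  obtain ⟨v, huv⟩ := exists_linearIndependent_pair_of_one_lt_finrank hV hu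
  by_cases h : B u u = 0
  · exact ⟨u, hu, h⟩
  obtain ⟨x, hx⟩ := IsAlgClosed.exists_root (Polynomial.C (B u u) * Polynomial.X ^ 2 +
    Polynomial.C (B u v + B v u) * Polynomial.X + Polynomial.C (B v v))
    (by rw [Polynomial.degree_quadratic h]; decide)
  refine ⟨x • u + v, fun hzero ↦ ?_, ?_⟩
  · exact one_ne_zero (LinearIndependent.pair_iff.mp huv x 1 (by rwa [one_smul])).2
  · simp only [Polynomial.IsRoot.def, Polynomial.eval_add, Polynomial.eval_mul,
      Polynomial.eval_C, Polynomial.eval_pow, Polynomial.eval_X] at hx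
    simp only [map_add, map_smul, LinearMap.add_apply, LinearMap.smul_apply, smul_eq_mul]
    linear_combination hx

variable [FiniteDimensional k V]

theorem exists_linearIndependent_sumElim {ι : Type*} [Fintype ι] {v : ι → V}
    (hv : LinearIndependent k v) {t : ℕ} (ht : Fintype.card ι + t ≤ Module.finrank k V) :
    ∃ w : Fin t → V, LinearIndependent k (Sum.elim v w) := by
  obtain ⟨W, hW⟩ := Submodule.exists_isCompl (Submodule.span k (Set.range v))
  have hfin := Submodule.finrank_add_eq_of_isCompl hW
  rw [finrank_span_eq_card hv] at hfin
  obtain ⟨w, hw⟩ := exists_linearIndependent_of_le_finrank (R := k) (M := W) (n := t) (by omega)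
  refine ⟨W.subtype ∘ w, hv.sum_type (hw.map' _ W.ker_subtype) (hW.disjoint.mono_right ?_)⟩
  rw [Submodule.span_le]
  rintro _ ⟨i, rfl⟩
  exact (w i).2

theorem exists_linearIndependent_finCons {v : V} (hv : v ≠ 0) {d : ℕ}
    (hd : d + 1 ≤ Module.finrank k V) :
    ∃ w : Fin d → V, LinearIndependent k (Fin.cons v w : Fin (d + 1) → V) := by
  obtain ⟨w, hw⟩ := exists_linearIndependent_sumElim (t := d)
    (LinearIndependent.of_subsingleton (R := k) (v := fun _ : Unit ↦ v) () hv)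
    (by simpa [add_comm] using hd)
  refine ⟨w, ?_⟩
  convert! hw.comp (Fin.cons (Sum.inl ()) Sum.inr : Fin (d + 1) → _) ?_ using 1
  · ext i
    cases i using Fin.cases <;> simp
  · exact Fin.cons_injective_iff.mpr ⟨by simp, Sum.inr_injective⟩

theorem exists_basis_isotropic [IsAlgClosed k] {d m : ℕ}
    (hV : Module.finrank k V = d + m + 2) (B : LinearMap.BilinForm k V) :
    ∃ b : Module.Basis (Fin (d + 1) ⊕ Fin (m + 1)) k V, B (b (.inl 0)) (b (.inl 0)) = 0 ∧
      ∀ i : Fin d, B (b (.inl 0)) (b (.inl i.succ)) + B (b (.inl i.succ)) (b (.inl 0)) = 0 := by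
  obtain ⟨v, hv, hBv⟩ := exists_ne_zero_apply_self_eq_zero (by omega) B
  let L : V →ₗ[k] k := B v + B.flip v
  let orth := LinearMap.ker L
  have mem_orth (u : V) : u ∈ orth ↔ B v u + B u v = 0 := Iff.rfl
  have finrank_orth : d + 1 ≤ Module.finrank k orth := by
    have rank_nullity : _ + Module.finrank k orth = _ := L.finrank_range_add_finrank_ker
    have range_le := (LinearMap.range L).finrank_le
    rw [Module.finrank_self] at range_le
    lia
  obtain ⟨w, hw⟩ := exists_linearIndependent_finCons (k := k)
    (v := (⟨v, by simp [mem_orth, hBv]⟩ : orth)) (by simpa using hv) finrank_orth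
  obtain ⟨u, hu⟩ := exists_linearIndependent_sumElim (t := m + 1)
    (hw.map' orth.subtype orth.ker_subtype) (by simp; omega)
  refine ⟨basisOfLinearIndependentOfCardEqFinrank hu (by simp; omega), ?_, fun i ↦ ?_⟩
  · simpa using hBv
  · simpa using (mem_orth _).mp (w i).2

end IsotropicBasis

section CuspDerivative

open QuadraticMap

variable {R : Type*} [CommRing R] {d : ℕ}

/-- The differential `c ↦ 3w₀²c₀ + polar Q (w₁, …, w_d) (c₁, …, c_d)` of `cuspForm` at `w`. -/
def cuspDeriv (w : Fin (d + 1) → R) : (Fin (d + 1) → R) →ₗ[R] R :=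
  (3 * w 0 ^ 2) • LinearMap.proj 0 +
    polarBilin (hyperbolicForm R d) (Fin.tail w) ∘ₗ LinearMap.funLeft R R Fin.succ

theorem cuspDeriv_apply (w c : Fin (d + 1) → R) :
    cuspDeriv w c = 3 * w 0 ^ 2 * c 0 + polar (hyperbolicForm R d) (Fin.tail w) (Fin.tail c) :=
  rfl

theorem map_cuspDeriv {S : Type*} [CommRing S] (φ : R →+* S)
    (w c : Fin (d + 1) → R) : φ (cuspDeriv w c) = cuspDeriv (φ ∘ w) (φ ∘ c) := by
  have comp_tail (v : Fin (d + 1) → R) : Fin.tail (φ ∘ v) = φ ∘ Fin.tail v := rfl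
  have comp_add (v w : Fin d → R) : φ ∘ v + φ ∘ w = φ ∘ (v + w) := by ext; simp
  simp only [cuspDeriv_apply, polar, comp_tail, comp_add, ← map_hyperbolicForm]
  simp [map_ofNat φ 3]

theorem cuspForm_add_smul (w c : Fin (d + 1) → R) (t : R) :
    cuspForm (w + t • c) = cuspForm w + t * cuspDeriv w c +
      t ^ 2 * (hyperbolicForm R d (Fin.tail c) + 3 * w 0 * c 0 ^ 2 + t * c 0 ^ 3) := by
  have tail_add : Fin.tail (w + t • c) = Fin.tail w + t • Fin.tail c := rfl
  rw [cuspForm, cuspForm, cuspDeriv_apply, tail_add, QuadraticMap.map_add (hyperbolicForm R d),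
    QuadraticMap.map_smul, polar_smul_right]
  simp only [smul_eq_mul, Pi.add_apply, Pi.smul_apply]
  ring

/-- The vectors `c` with `c₀ ∈ M` and `c₁, …, c_d ∈ L`. -/
def mixedVectors (M L : Ideal R) (d : ℕ) : Submodule R (Fin (d + 1) → R) :=
  Submodule.pi Set.univ (Fin.cons M fun _ ↦ L)

variable {M L K : Ideal R} {w c v : Fin (d + 1) → R}

theorem mem_mixedVectors : c ∈ mixedVectors M L d ↔ c 0 ∈ M ∧ ∀ i : Fin d, c i.succ ∈ L := by
  simp [mixedVectors, Submodule.mem_pi, Fin.forall_fin_succ]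

theorem comp_mem_mixedVectors_map {S : Type*} [CommRing S] (φ : R →+* S)
    (hc : c ∈ mixedVectors M L d) : φ ∘ c ∈ mixedVectors (M.map φ) (L.map φ) d := by
  rw [mem_mixedVectors] at hc ⊢
  exact ⟨Ideal.mem_map_of_mem _ hc.1, fun i ↦ Ideal.mem_map_of_mem _ (hc.2 i)⟩

theorem mul_mul_mem_of_cube_le (hM : M ^ 3 ≤ K) {a b c : R} (ha : a ∈ M) (hb : b ∈ M)
    (hc : c ∈ M) : a * b * c ∈ K :=
  hM (by rw [pow_three']; exact Ideal.mul_mem_mul (Ideal.mul_mem_mul ha hb) hc)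

theorem polar_hyperbolicForm_tail_mem (hL : L ^ 2 ≤ K) (hw : w ∈ mixedVectors M L d)
    (hc : c ∈ mixedVectors M L d) :
    polar (hyperbolicForm R d) (Fin.tail w) (Fin.tail c) ∈ K :=
  hL (by
    rw [pow_two]
    exact polar_hyperbolicForm_mem_mul (mem_mixedVectors.mp hw).2 (mem_mixedVectors.mp hc).2)

theorem cuspForm_mem_of_mem_mixedVectors (hM : M ^ 3 ≤ K) (hL : L ^ 2 ≤ K)
    (hw : w ∈ mixedVectors M L d) : cuspForm w ∈ K := by
  rw [mem_mixedVectors] at hw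
  exact add_mem (hL (hyperbolicForm_mem_sq hw.2)) (hM (Ideal.pow_mem_pow hw.1 3))

theorem cuspDeriv_mem_of_mem_mixedVectors (hM : M ^ 3 ≤ K) (hL : L ^ 2 ≤ K)
    (hw : w ∈ mixedVectors M L d) (hc : c ∈ mixedVectors M L d) : cuspDeriv w c ∈ K := by
  refine add_mem ?_ (polar_hyperbolicForm_tail_mem hL hw hc)
  rw [mem_mixedVectors] at hw hc
  convert! K.mul_mem_left 3 (mul_mul_mem_of_cube_le hM hw.1 hw.1 hc.1) using 1
  simp only [LinearMap.smul_apply, LinearMap.proj_apply, smul_eq_mul]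
  ring

theorem exists_cuspForm_add_smul_eq (hM : M ^ 3 ≤ K) (hL : L ^ 2 ≤ K)
    (hw : w ∈ mixedVectors M L d) (hc : c ∈ mixedVectors M L d) (t : R) :
    ∃ r ∈ K, cuspForm (w + t • c) = cuspForm w + t * cuspDeriv w c + t ^ 2 * r := by
  refine ⟨_, add_mem (add_mem ?_ ?_) (K.mul_mem_left t ?_), cuspForm_add_smul w c t⟩
  all_goals rw [mem_mixedVectors] at hw hc
  · exact hL (hyperbolicForm_mem_sq hc.2)
  · convert! K.mul_mem_left 3 (mul_mul_mem_of_cube_le hM hw.1 hc.1 hc.1) using 1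
    ring
  · exact hM (Ideal.pow_mem_pow hc.1 3)

theorem exists_cuspForm_add_smul_eq_add_mul (hM : M ^ 3 ≤ K) (hL : L ^ 2 ≤ K)
    (hw : w ∈ mixedVectors M L d) (hc : c ∈ mixedVectors M L d) (t : R) :
    ∃ r ∈ K, cuspForm (w + t • c) = cuspForm w + t * r := by
  obtain ⟨r, hr, heq⟩ := exists_cuspForm_add_smul_eq hM hL hw hc t
  exact ⟨cuspDeriv w c + t * r, add_mem (cuspDeriv_mem_of_mem_mixedVectors hM hL hw hc)
    (K.mul_mem_left t hr), by rw [heq]; ring⟩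

theorem exists_cuspDeriv_add_smul_eq (hM : M ^ 3 ≤ K) (hL : L ^ 2 ≤ K)
    (hw : w ∈ mixedVectors M L d) (hv : v ∈ mixedVectors M L d) (hc : c ∈ mixedVectors M L d)
    (t : R) : ∃ r ∈ K, cuspDeriv (w + t • v) c = cuspDeriv w c + t * r := by
  refine ⟨3 * (2 * (w 0 * v 0 * c 0) + t * (v 0 * v 0 * c 0)) +
    polar (hyperbolicForm R d) (Fin.tail v) (Fin.tail c), ?_, ?_⟩
  · refine add_mem (K.mul_mem_left _ (add_mem (K.mul_mem_left _ ?_) (K.mul_mem_left _ ?_)))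
      (polar_hyperbolicForm_tail_mem hL hv hc)
    all_goals rw [mem_mixedVectors] at hw hv hc
    · exact mul_mul_mem_of_cube_le hM hw.1 hv.1 hc.1
    · exact mul_mul_mem_of_cube_le hM hv.1 hv.1 hc.1
  · have tail_add : Fin.tail (w + t • v) = Fin.tail w + t • Fin.tail v := rfl
    rw [cuspDeriv_apply, cuspDeriv_apply, tail_add, polar_add_left, polar_smul_left]
    simp only [smul_eq_mul, Pi.add_apply, Pi.smul_apply]
    ring

end CuspDerivative

section Weights

variable {A : Type*} [CommRing A] {d : ℕ} {ι : Type*}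

/-- Give the coordinates `z (inl 0)`, `z (inl i.succ)`, `z (inr j)` the weights `2`, `3`, `4`, for
which `cuspForm (z ∘ inl)` is homogeneous of weight `6`. This is the ideal generated by the
monomials of weight at least `3`. -/
def weightThreeIdeal (z : Fin (d + 1) ⊕ ι → A) : Ideal A :=
  Ideal.span (Set.range fun i : Fin d ↦ z (.inl i.succ)) ⊔ Ideal.span (Set.range (z ∘ .inr)) ⊔
    Ideal.span {z (.inl 0) ^ 2}

/-- The ideal generated by the monomials of weight at least `6`, for the weights of
`weightThreeIdeal`. -/
def weightSixIdeal (z : Fin (d + 1) ⊕ ι → A) : Ideal A :=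
  Ideal.span (Set.range z) * Ideal.span (Set.range (z ∘ .inr)) ⊔
    Ideal.span (Set.range fun i : Fin d ↦ z (.inl i.succ)) ^ 2 ⊔
    Ideal.span (Set.range z) * Ideal.span {z (.inl 0) ^ 2}

variable (z : Fin (d + 1) ⊕ ι → A)

theorem weightThreeIdeal_le_span_range : weightThreeIdeal z ≤ Ideal.span (Set.range z) := by
  refine sup_le (sup_le ?_ ?_) ?_
  · exact Ideal.span_mono (Set.range_comp_subset_range (fun i : Fin d ↦ Sum.inl i.succ) z)
  · exact Ideal.span_mono (Set.range_comp_subset_range _ _)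
  · exact (Ideal.span_singleton_le_iff_mem _).mpr
      (Ideal.pow_mem_of_mem _ (Ideal.subset_span (Set.mem_range_self _)) 2 two_pos)

variable {z}

theorem comp_inl_mem_mixedVectors :
    z ∘ .inl ∈ mixedVectors (Ideal.span (Set.range z)) (weightThreeIdeal z) d :=
  mem_mixedVectors.mpr ⟨Ideal.subset_span ⟨_, rfl⟩, fun i ↦
    Ideal.mem_sup_left (Ideal.mem_sup_left (Ideal.subset_span ⟨i, rfl⟩))⟩

theorem mul_inr_mem_weightSixIdeal {a : A} (ha : a ∈ Ideal.span (Set.range z)) (j : ι) :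
    a * z (.inr j) ∈ weightSixIdeal z :=
  Ideal.mem_sup_left (Ideal.mem_sup_left (Ideal.mul_mem_mul ha (Ideal.subset_span ⟨j, rfl⟩)))

theorem inl_succ_mul_inl_succ_mem_weightSixIdeal (i j : Fin d) :
    z (.inl i.succ) * z (.inl j.succ) ∈ weightSixIdeal z := by
  refine Ideal.mem_sup_left (Ideal.mem_sup_right ?_)
  rw [pow_two]
  exact Ideal.mul_mem_mul (Ideal.subset_span ⟨i, rfl⟩) (Ideal.subset_span ⟨j, rfl⟩)

theorem mul_inl_zero_sq_mem_weightSixIdeal {a : A} (ha : a ∈ Ideal.span (Set.range z)) :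
    a * z (.inl 0) ^ 2 ∈ weightSixIdeal z :=
  Ideal.mem_sup_right (Ideal.mul_mem_mul ha (Ideal.mem_span_singleton_self _))

variable (z)

theorem span_range_cube_le_weightSixIdeal : Ideal.span (Set.range z) ^ 3 ≤ weightSixIdeal z := by
  have hz (s) : z s ∈ Ideal.span (Set.range z) := Ideal.subset_span ⟨s, rfl⟩
  have inr_mem (s t j) : z s * z t * z (.inr j) ∈ weightSixIdeal z :=
    mul_inr_mem_weightSixIdeal (Ideal.mul_mem_left _ _ (hz t)) j
  have succ_mem (s i j) : z s * z (.inl (Fin.succ i)) * z (.inl (Fin.succ j)) ∈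
      weightSixIdeal z := by
    rw [mul_assoc]
    exact Ideal.mul_mem_left _ _ (inl_succ_mul_inl_succ_mem_weightSixIdeal i j)
  have zero_mem (s) : z s * z (.inl 0) * z (.inl 0) ∈ weightSixIdeal z := by
    rw [mul_assoc, ← sq]
    exact mul_inl_zero_sq_mem_weightSixIdeal (hz s)
  rw [pow_three', Ideal.span_mul_span', Ideal.span_mul_span', Ideal.span_le]
  rintro _ ⟨_, ⟨_, ⟨s, rfl⟩, _, ⟨t, rfl⟩, rfl⟩, _, ⟨u, rfl⟩, rfl⟩
  simp only [SetLike.mem_coe]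
  rcases u with u | u
  swap; · exact inr_mem s t u
  rcases t with t | t
  swap; · rw [mul_right_comm]; exact inr_mem _ _ t
  rcases s with s | s
  swap; · rw [mul_assoc, mul_comm]; exact inr_mem _ _ s
  cases u using Fin.cases <;> cases t using Fin.cases <;> cases s using Fin.cases
  case zero.zero.zero | zero.zero.succ => exact zero_mem _
  case succ.succ.zero | succ.succ.succ => exact succ_mem _ _ _
  case zero.succ.zero => rw [mul_comm (z (.inl 0))]; exact zero_mem _
  case succ.zero.zero => rw [mul_comm, ← mul_assoc]; exact zero_mem _
  case zero.succ.succ => rw [mul_comm, ← mul_assoc]; exact succ_mem _ _ _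
  case succ.zero.succ => rw [mul_comm (z (.inl (Fin.succ _)))]; exact succ_mem _ _ _

theorem weightThreeIdeal_sq_le_weightSixIdeal : weightThreeIdeal z ^ 2 ≤ weightSixIdeal z := by
  have three_le := weightThreeIdeal_le_span_range z
  have mul_inr_le : weightThreeIdeal z * Ideal.span (Set.range (z ∘ .inr)) ≤ weightSixIdeal z :=
    (Ideal.mul_mono_left three_le).trans (le_sup_left.trans le_sup_left)
  have mul_sq_le : weightThreeIdeal z * Ideal.span {z (.inl 0) ^ 2} ≤ weightSixIdeal z :=
    (Ideal.mul_mono_left three_le).trans le_sup_right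
  have succ_le : Ideal.span (Set.range fun i : Fin d ↦ z (.inl i.succ)) ≤ weightThreeIdeal z :=
    le_sup_left.trans le_sup_left
  rw [pow_two]
  conv_lhs => enter [2]; rw [weightThreeIdeal]
  rw [Ideal.mul_sup, Ideal.mul_sup, mul_comm _ (Ideal.span (Set.range fun i : Fin d ↦ _))]
  refine sup_le (sup_le ?_ mul_inr_le) mul_sq_le
  rw [weightThreeIdeal, Ideal.mul_sup, Ideal.mul_sup, ← pow_two]
  exact sup_le (sup_le (le_sup_right.trans le_sup_left) ((Ideal.mul_mono_left succ_le).trans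
    mul_inr_le)) ((Ideal.mul_mono_left succ_le).trans mul_sq_le)

end Weights

section CuspTangent

open QuadraticMap

variable {A : Type*} [CommRing A] {d : ℕ} {ι : Type*}

/-- The first-order variations of the ideal `(cuspForm (z ∘ inl), z (inr j))` under moving the
coordinates along `mixedVectors`, rescaling `cuspForm` and adding multiples of the
`z (inr j)`. -/
def cuspTangentIdeal (z : Fin (d + 1) ⊕ ι → A) : Ideal A :=
  (mixedVectors (Ideal.span (Set.range z)) (weightThreeIdeal z) d).map (cuspDeriv (z ∘ .inl)) ⊔
    Ideal.span {cuspForm (z ∘ .inl)} ⊔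
    Ideal.span (Set.range z) * Ideal.span (Set.range (z ∘ .inr))

variable {z : Fin (d + 1) ⊕ ι → A}

theorem cuspForm_mem_cuspTangentIdeal : cuspForm (z ∘ .inl) ∈ cuspTangentIdeal z :=
  Ideal.mem_sup_left (Ideal.mem_sup_right (Ideal.mem_span_singleton_self _))

theorem cuspDeriv_mem_cuspTangentIdeal {c : Fin (d + 1) → A}
    (hc : c ∈ mixedVectors (Ideal.span (Set.range z)) (weightThreeIdeal z) d) :
    cuspDeriv (z ∘ .inl) c ∈ cuspTangentIdeal z :=
  Ideal.mem_sup_left (Ideal.mem_sup_left (Submodule.mem_map_of_mem hc))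

theorem three_mul_inl_zero_sq_mul_mem_cuspTangentIdeal {a : A}
    (ha : a ∈ Ideal.span (Set.range z)) : 3 * z (.inl 0) ^ 2 * a ∈ cuspTangentIdeal z := by
  have hc : Fin.cons a 0 ∈ mixedVectors (Ideal.span (Set.range z)) (weightThreeIdeal z) d :=
    mem_mixedVectors.mpr ⟨ha, fun _ ↦ zero_mem _⟩
  simpa [cuspDeriv_apply] using cuspDeriv_mem_cuspTangentIdeal hc

theorem polar_hyperbolicForm_mem_cuspTangentIdeal {v : Fin d → A}
    (hv : ∀ i, v i ∈ weightThreeIdeal z) :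
    polar (hyperbolicForm A d) (Fin.tail (z ∘ .inl)) v ∈ cuspTangentIdeal z := by
  have hc : Fin.cons 0 v ∈ mixedVectors (Ideal.span (Set.range z)) (weightThreeIdeal z) d :=
    mem_mixedVectors.mpr ⟨zero_mem _, hv⟩
  simpa [cuspDeriv_apply] using cuspDeriv_mem_cuspTangentIdeal hc

theorem polar_hyperbolicForm_single_mem_cuspTangentIdeal {a : A} (ha : a ∈ weightThreeIdeal z)
    (j : Fin d) :
    polar (hyperbolicForm A d) (Fin.tail (z ∘ .inl)) (Pi.single j a) ∈ cuspTangentIdeal z := by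
  refine polar_hyperbolicForm_mem_cuspTangentIdeal fun i ↦ ?_
  rcases eq_or_ne i j with rfl | hij
  · simpa using ha
  · simp [hij]

theorem inl_succ_mul_mem_cuspTangentIdeal {i : Fin d} (hi : ¬(Odd d ∧ (i : ℕ) = d - 1)) {a : A}
    (ha : a ∈ weightThreeIdeal z) : z (.inl i.succ) * a ∈ cuspTangentIdeal z := by
  obtain ⟨j, hj⟩ := exists_polar_hyperbolicForm_single_eq (R := A) hi
  convert! polar_hyperbolicForm_single_mem_cuspTangentIdeal ha j using 1
  exact (hj (Fin.tail (z ∘ .inl)) a).symm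

theorem inl_succ_mul_mem_cuspTangentIdeal_of_isUnit_two (h2 : IsUnit (2 : A)) (i : Fin d) {a : A}
    (ha : a ∈ weightThreeIdeal z) : z (.inl i.succ) * a ∈ cuspTangentIdeal z := by
  by_cases hi : Odd d ∧ (i : ℕ) = d - 1
  · rw [← Ideal.unit_mul_mem_iff_mem _ h2, ← mul_assoc]
    convert! polar_hyperbolicForm_single_mem_cuspTangentIdeal ha i using 1
    exact (polar_hyperbolicForm_single_last hi.1 (Fin.tail (z ∘ .inl)) a hi.2).symm
  · exact inl_succ_mul_mem_cuspTangentIdeal hi ha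

theorem inl_succ_mem_weightThreeIdeal (i : Fin d) : z (.inl i.succ) ∈ weightThreeIdeal z :=
  (mem_mixedVectors.mp comp_inl_mem_mixedVectors).2 i

theorem inl_zero_sq_mem_weightThreeIdeal : z (.inl 0) ^ 2 ∈ weightThreeIdeal z :=
  Ideal.mem_sup_right (Ideal.mem_span_singleton_self _)

theorem weightSixIdeal_le_cuspTangentIdeal_of_forall_mem
    (hsucc : ∀ i j : Fin d, z (.inl i.succ) * z (.inl j.succ) ∈ cuspTangentIdeal z)
    (hzero : ∀ s, z s * z (.inl 0) ^ 2 ∈ cuspTangentIdeal z) :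
    weightSixIdeal z ≤ cuspTangentIdeal z := by
  refine sup_le (sup_le le_sup_right ?_) ?_
  · rw [pow_two, Ideal.span_mul_span', Ideal.span_le]
    rintro _ ⟨_, ⟨i, rfl⟩, _, ⟨j, rfl⟩, rfl⟩
    exact hsucc i j
  · rw [Ideal.span_mul_span', Ideal.span_le]
    rintro _ ⟨_, ⟨s, rfl⟩, _, rfl, rfl⟩
    exact hzero s

theorem weightSixIdeal_le_cuspTangentIdeal_of_isUnit_two (h2 : IsUnit (2 : A)) :
    weightSixIdeal z ≤ cuspTangentIdeal z := by
  refine weightSixIdeal_le_cuspTangentIdeal_of_forall_mem (fun i j ↦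
    inl_succ_mul_mem_cuspTangentIdeal_of_isUnit_two h2 i (inl_succ_mem_weightThreeIdeal j)) ?_
  have form_mem : hyperbolicForm A d (Fin.tail (z ∘ .inl)) ∈ cuspTangentIdeal z := by
    rw [← Ideal.unit_mul_mem_iff_mem _ h2, ← smul_eq_mul, ← Nat.cast_two, Nat.cast_smul_eq_nsmul,
      ← polar_self]
    exact polar_hyperbolicForm_mem_cuspTangentIdeal inl_succ_mem_weightThreeIdeal
  rintro (s | j)
  · cases s using Fin.cases with
    | zero =>
      convert! sub_mem cuspForm_mem_cuspTangentIdeal form_mem using 1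
      rw [cuspForm, Function.comp_apply]
      ring
    | succ i =>
      exact inl_succ_mul_mem_cuspTangentIdeal_of_isUnit_two h2 i inl_zero_sq_mem_weightThreeIdeal
  · rw [mul_comm]
    exact Ideal.mem_sup_right (Ideal.mul_mem_mul (weightThreeIdeal_le_span_range z
      inl_zero_sq_mem_weightThreeIdeal) (Ideal.subset_span ⟨j, rfl⟩))

theorem inl_succ_sq_mem_cuspTangentIdeal_of_last (hd : Odd d) {i : Fin d} (hi : (i : ℕ) = d - 1)
    (hzero : z (.inl 0) ^ 3 ∈ cuspTangentIdeal z) :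
    z (.inl i.succ) ^ 2 ∈ cuspTangentIdeal z := by
  obtain ⟨i, hid⟩ := i
  obtain rfl : i = d - 1 := hi
  have pairs_mem : ∑ i : Fin (d / 2), z (.inl (Fin.succ ⟨2 * i, by omega⟩)) *
      z (.inl (Fin.succ ⟨2 * i + 1, by omega⟩)) ∈ cuspTangentIdeal z := by
    refine sum_mem fun i _ ↦
      inl_succ_mul_mem_cuspTangentIdeal ?_ (inl_succ_mem_weightThreeIdeal _)
    dsimp only
    omega
  convert! sub_mem (sub_mem cuspForm_mem_cuspTangentIdeal hzero) pairs_mem using 1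
  rw [cuspForm, hyperbolicForm_apply, dif_pos hd]
  simp only [Fin.tail, Function.comp_apply]
  ring

theorem weightSixIdeal_le_cuspTangentIdeal_of_two_eq_zero (h2 : (2 : A) = 0) :
    weightSixIdeal z ≤ cuspTangentIdeal z := by
  have h3 : (3 : A) = 1 := by linear_combination h2
  have hzero (s) : z s * z (.inl 0) ^ 2 ∈ cuspTangentIdeal z := by
    simpa [h3, mul_comm] using three_mul_inl_zero_sq_mul_mem_cuspTangentIdeal (z := z)
      (Ideal.subset_span (Set.mem_range_self s))
  refine weightSixIdeal_le_cuspTangentIdeal_of_forall_mem (fun i j ↦ ?_) hzero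
  by_cases hi : Odd d ∧ (i : ℕ) = d - 1
  · by_cases hj : Odd d ∧ (j : ℕ) = d - 1
    · obtain rfl : i = j := Fin.ext (hi.2.trans hj.2.symm)
      rw [← pow_two]
      exact inl_succ_sq_mem_cuspTangentIdeal_of_last hi.1 hi.2 (by simpa [pow_succ'] using hzero _)
    · rw [mul_comm]
      exact inl_succ_mul_mem_cuspTangentIdeal hj (inl_succ_mem_weightThreeIdeal i)
  · exact inl_succ_mul_mem_cuspTangentIdeal hi (inl_succ_mem_weightThreeIdeal j)

theorem weightSixIdeal_le_cuspTangentIdeal (k : Type*) [Field k] [Algebra k A] :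
    weightSixIdeal z ≤ cuspTangentIdeal z := by
  rcases eq_or_ne (2 : k) 0 with h2 | h2
  · refine weightSixIdeal_le_cuspTangentIdeal_of_two_eq_zero ?_
    rw [← map_ofNat (algebraMap k A), h2, map_zero]
  · refine weightSixIdeal_le_cuspTangentIdeal_of_isUnit_two ?_
    rw [← map_ofNat (algebraMap k A)]
    exact h2.isUnit.map _

end CuspTangent

section NewtonIteration

open Polynomial

variable {A : Type*} [CommRing A]

theorem exists_eq_C_add_X_mul_of_mem_map_C {I : Ideal A} {E : A[X]} (hE : E ∈ I.map C) :
    ∃ a ∈ I, ∃ E' ∈ I.map C, E = C a + X * E' := by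
  rw [Ideal.mem_map_C_iff] at hE
  refine ⟨E.coeff 0, hE 0, E.divX, Ideal.mem_map_C_iff.mpr fun n ↦ ?_, ?_⟩
  · rw [coeff_divX]
    exact hE _
  · rw [add_comm, X_mul_divX_add]

/-- The pencil `(1 - X)a + Xb`, with value `a` at `0` and `b` at `1`. -/
noncomputable def pencil (a b : A) : A[X] :=
  C a + X * C (b - a)

theorem eval_zero_pencil (a b : A) : (pencil a b).eval 0 = a := by
  simp [pencil]

theorem eval_one_pencil (a b : A) : (pencil a b).eval 1 = b := by
  simp [pencil]

theorem sum_sub_mul_mul_pencil {ι : Type*} (s : Finset ι) (x h δ : ι → A) (γ : ι → A[X])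
    (t : A[X]) : ∑ j ∈ s, (γ j - t * C (δ j)) * pencil (x j) (h j) =
      ∑ j ∈ s, γ j * pencil (x j) (h j) -
        t * (C (∑ j ∈ s, δ j * x j) + X * C (∑ j ∈ s, δ j * (h j - x j))) := by
  simp only [map_sum, map_mul, Finset.mul_sum, ← Finset.sum_add_distrib,
    ← Finset.sum_sub_distrib, pencil]
  exact Finset.sum_congr rfl fun j _ ↦ by ring

theorem map_pow_le_map_of_pow_le {B : Type*} [CommRing B] (φ : A →+* B) {I K : Ideal A} {n : ℕ}
    (h : I ^ n ≤ K) : I.map φ ^ n ≤ K.map φ := by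
  rw [← Ideal.map_pow]
  exact Ideal.map_mono h

variable {d : ℕ}

theorem exists_cuspForm_correction_eq {M L K : Ideal A} (hM : M ^ 3 ≤ K) (hL : L ^ 2 ≤ K)
    {w v c : Fin (d + 1) → A} (hw : w ∈ mixedVectors M L d) (hv : v ∈ mixedVectors M L d)
    (hc : c ∈ mixedVectors M L d) (a b t τ : A) :
    ∃ r ∈ K, (1 + t * (a - τ * b)) * cuspForm (w + t • (v - τ • c)) =
      (1 + t * a) * cuspForm (w + t • v) - t * τ * (cuspDeriv w c + b * cuspForm w) +
        t ^ 2 * τ * r := by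
  have hu : w + t • v ∈ mixedVectors M L d := add_mem hw (Submodule.smul_mem _ _ hv)
  obtain ⟨r₁, hr₁, expansion⟩ := exists_cuspForm_add_smul_eq hM hL hu hc (-(t * τ))
  obtain ⟨r₂, hr₂, deriv_eq⟩ := exists_cuspDeriv_add_smul_eq hM hL hw hv hc t
  obtain ⟨r₃, hr₃, form_eq⟩ := exists_cuspForm_add_smul_eq_add_mul hM hL hw
    (sub_mem hv (Submodule.smul_mem _ τ hc)) t
  have hD : cuspDeriv (w + t • v) c ∈ K := cuspDeriv_mem_of_mem_mixedVectors hM hL hu hc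
  refine ⟨-r₂ - a * cuspDeriv (w + t • v) c + (1 + t * a) * τ * r₁ - b * r₃,
    sub_mem (add_mem (sub_mem (neg_mem hr₂) (K.mul_mem_left _ hD)) (K.mul_mem_left _ hr₁))
      (K.mul_mem_left _ hr₃), ?_⟩
  have hshift : w + t • v + -(t * τ) • c = w + t • (v - τ • c) := by module
  rw [hshift] at expansion
  linear_combination (1 + t * a) * expansion - t * τ * deriv_eq - t * τ * b * form_eq

variable {ι : Type*} [Fintype ι] {z : Fin (d + 1) ⊕ ι → A}

theorem exists_eq_of_mem_cuspTangentIdeal {a : A} (ha : a ∈ cuspTangentIdeal z) :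
    ∃ c ∈ mixedVectors (Ideal.span (Set.range z)) (weightThreeIdeal z) d, ∃ b : A, ∃ γ : ι → A,
      (∀ j, γ j ∈ Ideal.span (Set.range z)) ∧
      a = cuspDeriv (z ∘ .inl) c + b * cuspForm (z ∘ .inl) + ∑ j, γ j * z (.inr j) := by
  obtain ⟨_, h, e, he, rfl⟩ := Submodule.mem_sup.mp ha
  obtain ⟨_, ⟨c, hc, rfl⟩, _, hb, rfl⟩ := Submodule.mem_sup.mp h
  obtain ⟨b, rfl⟩ := Ideal.mem_span_singleton'.mp hb
  obtain ⟨γ, hγ, rfl⟩ := (Submodule.mem_ideal_smul_span_iff_exists_sum _ _ _).mp he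
  exact ⟨c, hc, b, γ, hγ, by simp [Finsupp.sum_fintype]⟩

variable {g : A} {h : ι → A}

theorem sum_mul_sub_inr_mem_weightSixIdeal {γ : ι → A}
    (hγ : ∀ j, γ j ∈ Ideal.span (Set.range z)) (hh : ∀ j, h j ∈ Ideal.span (Set.range z) ^ 2) :
    ∑ j, γ j * (h j - z (.inr j)) ∈ weightSixIdeal z := by
  refine sum_mem fun j _ ↦ ?_
  rw [mul_sub]
  refine sub_mem (span_range_cube_le_weightSixIdeal z ?_) (mul_inr_mem_weightSixIdeal (hγ j) j)
  rw [pow_succ']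
  exact Ideal.mul_mem_mul (hγ j) (hh j)

/-- Newton iteration: the error in `weightSixIdeal` is a first-order variation of the cusp, hence
can be absorbed at the next order in `X`. -/
theorem exists_cuspForm_eq_pencil_add_X_pow_mul (htangent : weightSixIdeal z ≤ cuspTangentIdeal z)
    (hg : g ∈ weightSixIdeal z) (hh : ∀ j, h j ∈ Ideal.span (Set.range z) ^ 2) (N : ℕ) :
    ∃ v ∈ mixedVectors ((Ideal.span (Set.range z)).map C) ((weightThreeIdeal z).map C) d,
    ∃ (a : A[X]) (γ : ι → A[X]), ∃ E ∈ (weightSixIdeal z).map C,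
      (1 + X * a) * cuspForm (C ∘ z ∘ .inl + (X : A[X]) • v) +
          ∑ j, γ j * pencil (z (.inr j)) (h j) =
        pencil (cuspForm (z ∘ .inl)) g + X ^ (N + 1) * E := by
  have hM := span_range_cube_le_weightSixIdeal z
  have hL := weightThreeIdeal_sq_le_weightSixIdeal z
  induction N with
  | zero =>
    have form_mem := cuspForm_mem_of_mem_mixedVectors hM hL comp_inl_mem_mixedVectors
    refine ⟨0, zero_mem _, 0, 0, C (cuspForm (z ∘ .inl) - g),
      Ideal.mem_map_of_mem _ (sub_mem form_mem hg), ?_⟩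
    simp only [mul_zero, add_zero, smul_zero, one_mul, Pi.zero_apply, zero_mul,
      Finset.sum_const_zero, pencil, zero_add, pow_one, map_sub]
    rw [map_cuspForm C]
    ring
  | succ N ih =>
    obtain ⟨v, hv, a, γ, _, herror, heq⟩ := ih
    obtain ⟨e, he, E, hE, rfl⟩ := exists_eq_C_add_X_mul_of_mem_map_C herror
    obtain ⟨c, hc, b, δ, hδ, rfl⟩ := exists_eq_of_mem_cuspTangentIdeal (htangent he)
    have hCc := comp_mem_mixedVectors_map C hc
    obtain ⟨r, hr, correction⟩ := exists_cuspForm_correction_eq (map_pow_le_map_of_pow_le C hM)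
      (map_pow_le_map_of_pow_le C hL) (comp_mem_mixedVectors_map C comp_inl_mem_mixedVectors) hv hCc
      a (C b) X (X ^ N)
    refine ⟨v - X ^ N • (C ∘ c), sub_mem hv (Submodule.smul_mem _ _ hCc), a - X ^ N * C b,
      fun j ↦ γ j - X ^ (N + 1) * C (δ j), E + r - C (∑ j, δ j * (h j - z (.inr j))),
      sub_mem (add_mem hE hr)
        (Ideal.mem_map_of_mem _ (sum_mul_sub_inr_mem_weightSixIdeal hδ hh)), ?_⟩
    rw [map_add, map_add, map_mul, map_cuspDeriv, map_cuspForm C] at heq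
    rw [sum_sub_mul_mul_pencil]
    linear_combination correction + heq

end NewtonIteration

section Semicontinuity

open Polynomial

variable {k A : Type*} [Field k] [CommRing A] [Algebra k A]

/-- The application of a linear functional to the coefficients of a polynomial. -/
noncomputable def mapCoeff (π : Module.Dual k A) : A[X] →ₗ[k] k[X] :=
  Polynomial.lsum fun n ↦ monomial n ∘ₗ π

theorem mapCoeff_monomial (π : Module.Dual k A) (n : ℕ) (a : A) :
    mapCoeff π (monomial n a) = monomial n (π a) := by
  simp [mapCoeff]

theorem eval_mapCoeff (π : Module.Dual k A) (P : A[X]) (s : k) :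
    (mapCoeff π P).eval s = π (P.eval (algebraMap k A s)) := by
  induction P using Polynomial.induction_on' with
  | add P Q hP hQ => simp [hP, hQ]
  | monomial n a =>
    rw [mapCoeff_monomial, eval_monomial, eval_monomial, ← map_pow, mul_comm a, ← Algebra.smul_def,
      map_smul, smul_eq_mul, mul_comm]

theorem mapCoeff_X_pow_mul (π : Module.Dual k A) (N : ℕ) (P : A[X]) :
    mapCoeff π (X ^ N * P) = X ^ N * mapCoeff π P := by
  induction P using Polynomial.induction_on' with
  | add P Q hP hQ => simp only [mul_add, map_add, hP, hQ]
  | monomial n a => simp only [X_pow_mul_monomial, mapCoeff_monomial]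

theorem exists_dual_apply_eq_one {κ V : Type*} [DecidableEq κ] [AddCommGroup V] [Module k V]
    {w : κ → V} (hw : LinearIndependent k w) :
    ∃ π : κ → Module.Dual k V, Matrix.of (fun i j ↦ π i (w j)) = 1 := by
  obtain ⟨φ, hφ⟩ := LinearMap.exists_leftInverse_of_injective _ (LinearMap.ker_eq_bot.mpr hw)
  refine ⟨fun i ↦ Finsupp.lapply i ∘ₗ φ, ?_⟩
  ext i j
  have happly : φ (w j) = Finsupp.single j 1 := by
    simpa using LinearMap.congr_fun hφ (Finsupp.single j 1)
  simp [happly, Matrix.one_apply, Finsupp.single_apply, eq_comm]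

section Generic

variable {κ : Type*} [Fintype κ] [DecidableEq κ]

theorem eval_det_mapCoeff (π : κ → Module.Dual k A) (w : κ → A[X]) (s : k) :
    (Matrix.of fun i j ↦ mapCoeff (π i) (w j)).det.eval s =
      (Matrix.of fun i j ↦ π i ((w j).eval (algebraMap k A s))).det := by
  rw [← coe_evalRingHom, RingHom.map_det]
  congr 1
  ext i j
  simp [eval_mapCoeff]

theorem X_pow_dvd_det_mapCoeff_sub_det_mapCoeff (π : κ → Module.Dual k A) {w w' : κ → A[X]} {N : ℕ}
    (hw : ∀ j, X ^ N ∣ w' j - w j) :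
    X ^ N ∣ (Matrix.of fun i j ↦ mapCoeff (π i) (w' j)).det -
      (Matrix.of fun i j ↦ mapCoeff (π i) (w j)).det := by
  rw [← Ideal.mem_span_singleton, ← Ideal.Quotient.mk_eq_mk_iff_sub_mem, RingHom.map_det,
    RingHom.map_det]
  congr 1
  ext i j
  obtain ⟨E, hE⟩ := hw j
  simp only [RingHom.mapMatrix_apply, Matrix.map_apply, Matrix.of_apply]
  rw [Ideal.Quotient.mk_eq_mk_iff_sub_mem, Ideal.mem_span_singleton, ← map_sub, hE,
    mapCoeff_X_pow_mul]
  exact dvd_mul_right _ _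

theorem linearIndependent_of_det_ne_zero {V : Type*} [AddCommGroup V] [Module k V] {w : κ → V}
    (π : κ → Module.Dual k V) (hdet : (Matrix.of fun i j ↦ π i (w j)).det ≠ 0) :
    LinearIndependent k w :=
  .of_comp (LinearMap.pi π) (Matrix.linearIndependent_cols_iff_isUnit.mpr
    ((Matrix.isUnit_iff_isUnit_det _).mpr hdet.isUnit))

end Generic

theorem exists_forall_linearIndependent_eval {κ : Type*} [Finite κ] {w : κ → A[X]} {a : k}
    (hw : LinearIndependent k fun i ↦ (w i).eval (algebraMap k A a)) :
    ∃ N : ℕ, ∀ w' : κ → A[X], (∀ i, X ^ N ∣ w' i - w i) → ∃ h : k[X], h ≠ 0 ∧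
      ∀ s, h.eval s ≠ 0 → LinearIndependent k fun i ↦ (w' i).eval (algebraMap k A s) := by
  classical
  have := Fintype.ofFinite κ
  obtain ⟨π, hπ⟩ := exists_dual_apply_eq_one hw
  let D (u : κ → A[X]) : k[X] := (Matrix.of fun i j ↦ mapCoeff (π i) (u j)).det
  have hD : D w ≠ 0 := by
    intro h
    have hone : (D w).eval a = 1 := by rw [eval_det_mapCoeff, hπ, Matrix.det_one]
    simp [h] at hone
  refine ⟨(D w).natDegree + 1, fun w' hw' ↦ ⟨D w', fun h ↦ ?_, fun s hs ↦ ?_⟩⟩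
  · have hdvd : X ^ ((D w).natDegree + 1) ∣ D w := by
      simpa [D, h] using X_pow_dvd_det_mapCoeff_sub_det_mapCoeff π hw'
    have hdeg := natDegree_le_of_dvd hdvd hD
    rw [natDegree_X_pow] at hdeg
    omega
  · exact linearIndependent_of_det_ne_zero π (by rwa [← eval_det_mapCoeff])

variable [Module.Finite k A]

theorem finrank_quotient_le_finrank_quotient_of_linearIndependent {I J : Ideal A}
    {w : Fin (Module.finrank k (I.restrictScalars k)) → A} (hw : LinearIndependent k w)
    (hmem : ∀ i, w i ∈ J) : Module.finrank k (A ⧸ J) ≤ Module.finrank k (A ⧸ I) := by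
  have hle : Module.finrank k (I.restrictScalars k) ≤ Module.finrank k (J.restrictScalars k) := by
    have hw' : LinearIndependent k fun i ↦ (⟨w i, hmem i⟩ : J.restrictScalars k) :=
      .of_comp (J.restrictScalars k).subtype hw
    simpa using hw'.fintype_card_le_finrank
  have hI := Submodule.finrank_quotient_add_finrank (I.restrictScalars k)
  have hJ := Submodule.finrank_quotient_add_finrank (J.restrictScalars k)
  change Module.finrank k (A ⧸ J.restrictScalars k) ≤ Module.finrank k (A ⧸ I.restrictScalars k)
  omega

theorem exists_forall_finrank_quotient_span_eval_le {ι : Type*} [Finite ι] (P : ι → A[X]) (a : k) :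
    ∃ N : ℕ, ∀ P' : ι → A[X], (∀ j, X ^ N ∣ P' j - P j) → ∃ h : k[X], h ≠ 0 ∧
      ∀ s, h.eval s ≠ 0 →
        Module.finrank k
            (A ⧸ Ideal.span (Set.range fun j ↦ (P' j).eval (algebraMap k A s))) ≤
          Module.finrank k (A ⧸ Ideal.span (Set.range fun j ↦ (P j).eval (algebraMap k A a))) := by
  have := Fintype.ofFinite ι
  set I := Ideal.span (Set.range fun j ↦ (P j).eval (algebraMap k A a))
  let b := Module.finBasis k (I.restrictScalars k)
  have mem_span (i) : ∃ c : ι → A, ∑ j, c j * (P j).eval (algebraMap k A a) = b i :=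
    Ideal.mem_span_range_iff_exists_fun.mp (b i).2
  choose c hc using mem_span
  let W (P' : ι → A[X]) (i) : A[X] := ∑ j, C (c i j) * P' j
  have eval_W (P' : ι → A[X]) (i) (s : k) : (W P' i).eval (algebraMap k A s) =
      ∑ j, c i j * (P' j).eval (algebraMap k A s) := by
    simp [W, eval_finsetSum]
  have hli : LinearIndependent k fun i ↦ (W P i).eval (algebraMap k A a) := by
    simp only [eval_W, hc]
    exact b.linearIndependent.map' (I.restrictScalars k).subtype (Submodule.ker_subtype _)
  obtain ⟨N, hN⟩ := exists_forall_linearIndependent_eval hli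
  refine ⟨N, fun P' hP' ↦ ?_⟩
  obtain ⟨h, hne, hindep⟩ := hN (W P') fun i ↦ by
    simp only [W, ← Finset.sum_sub_distrib, ← mul_sub]
    exact Finset.dvd_sum fun j _ ↦ (hP' j).mul_left _
  refine ⟨h, hne, fun s hs ↦
    finrank_quotient_le_finrank_quotient_of_linearIndependent (hindep s hs) fun i ↦ ?_⟩
  rw [eval_W]
  exact sum_mem fun j _ ↦ Ideal.mul_mem_left _ _ (Ideal.subset_span ⟨j, rfl⟩)

theorem exists_forall_exists_algEquiv_apply_eq_eval {ψ : A →ₐ[k] A[X]}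
    (hψ : ∀ a, (ψ a).eval 0 = a) : ∃ h : k[X], h ≠ 0 ∧ ∀ s, h.eval s ≠ 0 →
      ∃ θ : A ≃ₐ[k] A, ∀ a, θ a = (ψ a).eval (algebraMap k A s) := by
  let b := Module.finBasis k A
  have hli : LinearIndependent k fun i ↦ (ψ (b i)).eval (algebraMap k A 0) := by
    simpa [hψ] using b.linearIndependent
  obtain ⟨N, hN⟩ := exists_forall_linearIndependent_eval hli
  obtain ⟨h, hne, hindep⟩ := hN (fun i ↦ ψ (b i)) fun i ↦ by simp
  refine ⟨h, hne, fun s hs ↦ ?_⟩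
  let φ : A →ₐ[k] A := ((aeval (algebraMap k A s)).restrictScalars k).comp ψ
  have φ_apply (a : A) : φ a = (ψ a).eval (algebraMap k A s) := by
    simp [φ, coe_aeval_eq_eval]
  have hφ : Function.Surjective φ.toLinearMap := by
    rw [← LinearMap.range_eq_top, eq_top_iff,
      ← (hindep s hs).span_eq_top_of_card_eq_finrank' (Fintype.card_fin _), Submodule.span_le]
    rintro _ ⟨i, rfl⟩
    exact ⟨b i, φ_apply (b i)⟩
  exact ⟨.ofBijective φ ⟨LinearMap.injective_iff_surjective.mpr hφ, hφ⟩, φ_apply⟩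

end Semicontinuity

section Degeneration

open Polynomial

variable {σ k : Type*} [Field k] (p : ℕ) [Fact p.Prime] [CharP k p] {e : ℕ}

theorem pow_eq_zero_of_mem_span_range_truncX {x : PowTrunc σ k (p ^ e)}
    (hx : x ∈ Ideal.span (Set.range (truncX k (p ^ e)))) : x ^ p ^ e = 0 := by
  rw [← Ideal.mem_bot]
  exact pow_char_pow_mem_of_mem_span (k := k) p
    (Set.forall_mem_range.mpr fun i ↦ Ideal.mem_bot.mpr (truncX_pow i)) hx

theorem pow_char_pow_eq_zero_of_mem_map {A B : Type*} [CommRing A] [CommRing B] [Algebra k B]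
    (φ : A →+* B) {I : Ideal A} (hI : ∀ a ∈ I, a ^ p ^ e = 0) {x : B} (hx : x ∈ I.map φ) :
    x ^ p ^ e = 0 := by
  rw [← Ideal.mem_bot]
  refine pow_char_pow_mem_of_mem_span (k := k) p (Set.forall_mem_image.mpr fun a ha ↦ ?_) hx
  rw [Ideal.mem_bot, ← map_pow, hI a ha, map_zero]

theorem exists_forall_exists_algEquiv_truncX_eq_eval [Finite σ] {y : σ → (PowTrunc σ k (p ^ e))[X]}
    (hy : ∀ i, y i ∈ (Ideal.span (Set.range (truncX k (p ^ e)))).map C)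
    (hy0 : ∀ i, (y i).eval 0 = truncX k (p ^ e) i) :
    ∃ h : k[X], h ≠ 0 ∧ ∀ s, h.eval s ≠ 0 →
      ∃ θ : PowTrunc σ k (p ^ e) ≃ₐ[k] PowTrunc σ k (p ^ e),
        ∀ i, θ (truncX k (p ^ e) i) = (y i).eval (algebraMap k _ s) := by
  obtain ⟨ψ, hψ⟩ := exists_algHom_truncX_eq (k := k) (w := y) fun i ↦
    pow_char_pow_eq_zero_of_mem_map (k := k) p C
      (fun a ↦ pow_eq_zero_of_mem_span_range_truncX p) (hy i)
  have heq : ((aeval (0 : PowTrunc σ k (p ^ e))).restrictScalars k).comp ψ = .id k _ := by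
    refine AlgHom.ext_of_adjoin_eq_top adjoin_range_truncX ?_
    rintro _ ⟨i, rfl⟩
    simpa [hψ, coe_aeval_eq_eval] using hy0 i
  have eval_zero (a) : (ψ a).eval 0 = a := by
    simpa [coe_aeval_eq_eval] using DFunLike.congr_fun heq a
  obtain ⟨h, hne, hequiv⟩ := exists_forall_exists_algEquiv_apply_eq_eval eval_zero
  refine ⟨h, hne, fun s hs ↦ ?_⟩
  obtain ⟨θ, hθ⟩ := hequiv s hs
  exact ⟨θ, fun i ↦ by rw [hθ, hψ]⟩

theorem pencil_mem_map_C {A : Type*} [CommRing A] {I : Ideal A} {a b : A} (ha : a ∈ I)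
    (hb : b ∈ I) : pencil a b ∈ I.map C :=
  add_mem (Ideal.mem_map_of_mem _ ha)
    (Ideal.mul_mem_left _ _ (Ideal.mem_map_of_mem _ (sub_mem hb ha)))

theorem apply_mem_of_mem_mixedVectors {A : Type*} [CommRing A] {M L : Ideal A} (hLM : L ≤ M)
    {d : ℕ} {c : Fin (d + 1) → A} (hc : c ∈ mixedVectors M L d) (i : Fin (d + 1)) : c i ∈ M := by
  rw [mem_mixedVectors] at hc
  exact Fin.cases hc.1 (fun i ↦ hLM (hc.2 i)) i

theorem finrank_quotient_cuspForm_truncX_le_of_algEquiv {d q : ℕ} (hq : q ≠ 0) {ι : Type*}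
    [Finite ι] (θ : PowTrunc (Fin (d + 1) ⊕ ι) k q ≃ₐ[k] PowTrunc (Fin (d + 1) ⊕ ι) k q)
    {I : Ideal (PowTrunc (Fin (d + 1) ⊕ ι) k q)}
    (hI : I ≤ Ideal.span {θ (cuspForm (truncX k q ∘ .inl))} ⊔
      Ideal.span (Set.range fun j ↦ θ (truncX k q (.inr j)))) :
    Module.finrank k (PowTrunc (Fin (d + 1)) k q ⧸ Ideal.span {cuspForm (truncX k q)}) ≤
      Module.finrank k (PowTrunc (Fin (d + 1) ⊕ ι) k q ⧸ I) := by
  obtain ⟨ρ, hρ⟩ := exists_algHom_truncX_eq (k := k) (q := q)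
    (w := Sum.elim (truncX (σ := Fin (d + 1)) k q) fun _ : ι ↦ 0)
    (Sum.rec (fun i ↦ truncX_pow i) fun _ ↦ zero_pow hq)
  have comp_symm_cuspForm : (ρ.comp (θ.symm : _ →ₐ[k] _)) (θ (cuspForm (truncX k q ∘ .inl))) =
      cuspForm (truncX k q) := by
    rw [AlgHom.comp_apply, AlgEquiv.coe_toAlgHom, θ.symm_apply_apply, map_cuspForm]
    exact congrArg cuspForm (funext fun i ↦ hρ (.inl i))
  refine finrank_quotient_le_of_surjective (ρ.comp (θ.symm : _ →ₐ[k] _))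
    (surjective_of_truncX_mem_range _ fun i ↦ ⟨θ (truncX k q (.inl i)), by simp [hρ]⟩)
    (hI.trans (sup_le ?_ ?_))
  · rw [Ideal.span_singleton_le_iff_mem, Ideal.mem_comap, comp_symm_cuspForm]
    exact Ideal.mem_span_singleton_self _
  · rw [Ideal.span_le]
    rintro _ ⟨j, rfl⟩
    simp [hρ]

theorem span_range_eval_cons_cuspForm_le {A : Type*} [CommRing A] {d m : ℕ}
    {z : Fin (d + 1) ⊕ Fin m → A} (θ : A →+* A) {s : A} {u : Fin (d + 1) → A[X]} {w : Fin m → A[X]}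
    (hu : ∀ i, θ (z (.inl i)) = (u i).eval s) (hw : ∀ j, θ (z (.inr j)) = (w j).eval s)
    (a : A[X]) (γ : Fin m → A[X]) :
    Ideal.span (Set.range fun j ↦
        ((Fin.cons (a * cuspForm u + ∑ j, γ j * w j) w : Fin (m + 1) → A[X]) j).eval s) ≤
      Ideal.span {θ (cuspForm (z ∘ .inl))} ⊔ Ideal.span (Set.range fun j ↦ θ (z (.inr j))) := by
  have eval_w_mem (j : Fin m) : (w j).eval s ∈ Ideal.span (Set.range fun j ↦ θ (z (.inr j))) :=
    Ideal.subset_span ⟨j, hw j⟩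
  have eval_cuspForm : (cuspForm u).eval s = θ (cuspForm (z ∘ .inl)) := by
    rw [map_cuspForm, ← coe_evalRingHom, map_cuspForm]
    exact congrArg cuspForm (funext fun i ↦ (hu i).symm)
  rw [Ideal.span_le, Set.range_subset_iff]
  refine Fin.cases ?_ fun j ↦ Ideal.mem_sup_right (eval_w_mem j)
  rw [Fin.cons_zero, eval_add, eval_mul, eval_cuspForm, eval_finsetSum]
  refine add_mem (Ideal.mem_sup_left (Ideal.mul_mem_left _ _ (Ideal.mem_span_singleton_self _)))
    (sum_mem fun j _ ↦ Ideal.mem_sup_right ?_)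
  rw [eval_mul]
  exact Ideal.mul_mem_left _ _ (eval_w_mem j)

variable {d m : ℕ}

local notation "A" => PowTrunc (Fin (d + 1) ⊕ Fin m) k (p ^ e)
local notation "𝐳" => truncX (σ := Fin (d + 1) ⊕ Fin m) k (p ^ e)

theorem exists_forall_exists_algEquiv_inl_inr {v : Fin (d + 1) → A[X]}
    (hv : v ∈ mixedVectors ((Ideal.span (Set.range 𝐳)).map C) ((weightThreeIdeal 𝐳).map C) d)
    {h : Fin m → A} (hh : ∀ j, h j ∈ Ideal.span (Set.range 𝐳) ^ 2) :
    ∃ h₀ : k[X], h₀ ≠ 0 ∧ ∀ s, h₀.eval s ≠ 0 → ∃ θ : A ≃ₐ[k] A,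
      (∀ i, θ (𝐳 (.inl i)) = ((C ∘ 𝐳 ∘ .inl + (X : A[X]) • v) i).eval (algebraMap k A s)) ∧
      ∀ j, θ (𝐳 (.inr j)) = (pencil (𝐳 (.inr j)) (h j)).eval (algebraMap k A s) := by
  have hz (i) : 𝐳 i ∈ Ideal.span (Set.range 𝐳) := Ideal.subset_span (Set.mem_range_self i)
  obtain ⟨h₀, hne, hequiv⟩ := exists_forall_exists_algEquiv_truncX_eq_eval p
    (y := Sum.elim (C ∘ 𝐳 ∘ .inl + (X : A[X]) • v) fun j ↦ pencil (𝐳 (.inr j)) (h j))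
    (Sum.rec
      (fun i ↦ add_mem (Ideal.mem_map_of_mem _ (hz _)) (Ideal.mul_mem_left _ _
        (apply_mem_of_mem_mixedVectors (Ideal.map_mono (weightThreeIdeal_le_span_range _)) hv i)))
      fun j ↦ pencil_mem_map_C (hz _) (Ideal.pow_le_self two_ne_zero (hh j)))
    (Sum.rec (fun i ↦ by simp) fun j ↦ eval_zero_pencil _ _)
  refine ⟨h₀, hne, fun s hs ↦ ?_⟩
  obtain ⟨θ, hθ⟩ := hequiv s hs
  exact ⟨θ, fun i ↦ hθ (.inl i), fun j ↦ hθ (.inr j)⟩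

theorem finrank_quotient_cuspForm_truncX_le [Infinite k] {G : Fin (m + 1) → A}
    (hG0 : G 0 ∈ weightSixIdeal 𝐳) (hG : ∀ j : Fin m, G j.succ ∈ Ideal.span (Set.range 𝐳) ^ 2) :
    Module.finrank k
        (PowTrunc (Fin (d + 1)) k (p ^ e) ⧸ Ideal.span {cuspForm (truncX k (p ^ e))}) ≤
      Module.finrank k (A ⧸ Ideal.span (Set.range G)) := by
  let w : Fin m → A[X] := fun j ↦ pencil (𝐳 (.inr j)) (G j.succ)
  let P : Fin (m + 1) → A[X] := Fin.cons (pencil (cuspForm (𝐳 ∘ .inl)) (G 0)) w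
  have eval_P : (fun j ↦ (P j).eval (algebraMap k A 1)) = G := by
    ext j
    rw [map_one]
    cases j using Fin.cases <;> exact eval_one_pencil _ _
  obtain ⟨N, hN⟩ := exists_forall_finrank_quotient_span_eval_le P (1 : k)
  rw [eval_P] at hN
  obtain ⟨v, hv, a, γ, E, -, hnewton⟩ := exists_cuspForm_eq_pencil_add_X_pow_mul
    (weightSixIdeal_le_cuspTangentIdeal k) hG0 hG N
  obtain ⟨h₁, hh₁, hdim⟩ := hN (Fin.cons (P 0 + X ^ (N + 1) * E) w)
    (Fin.cases ⟨X * E, by simp [pow_succ, mul_assoc]⟩ fun j ↦ by simp [P])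
  obtain ⟨h₂, hh₂, hequiv⟩ := exists_forall_exists_algEquiv_inl_inr p hv hG
  obtain ⟨s, hs⟩ : ∃ s, (h₁ * h₂).eval s ≠ 0 := by
    by_contra! h
    exact mul_ne_zero hh₁ hh₂ (Polynomial.funext fun s ↦ by rw [h s, eval_zero])
  rw [eval_mul, mul_ne_zero_iff] at hs
  obtain ⟨θ, hinl, hinr⟩ := hequiv s hs.2
  refine (finrank_quotient_cuspForm_truncX_le_of_algEquiv
    (pow_ne_zero _ (Fact.out : p.Prime).ne_zero) θ ?_).trans (hdim s hs.1)
  have hP0 : P 0 = pencil (cuspForm (𝐳 ∘ .inl)) (G 0) := rfl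
  rw [hP0, ← hnewton]
  exact span_range_eval_cons_cuspForm_le (θ : A →+* A) hinl hinr _ γ

end Degeneration

section QuadraticChangeOfVariables

theorem sum_sum_smul_mul_eq_sum_sum_toBilin'_smul {σ τ k A : Type*} [CommRing k] [CommRing A]
    [Algebra k A] [Fintype σ] [DecidableEq σ] [Fintype τ] (α : Matrix σ σ k) (b : τ → σ → k)
    (z : τ → A) :
    ∑ i, ∑ j, α i j • ((∑ s, b s i • z s) * ∑ t, b t j • z t) =
      ∑ s, ∑ t, Matrix.toBilin' α (b s) (b t) • (z s * z t) := by
  simp only [Matrix.toBilin'_apply, Finset.sum_mul_sum, Finset.smul_sum, Finset.sum_smul,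
    smul_mul_smul_comm, smul_smul]
  rw [Finset.sum_comm_cycle]
  refine Finset.sum_congr rfl fun s _ ↦ ?_
  rw [Finset.sum_comm_cycle]
  refine Finset.sum_congr rfl fun t _ ↦ Finset.sum_congr rfl fun i _ ↦
    Finset.sum_congr rfl fun j _ ↦ ?_
  congr 1
  ring

theorem sum_sum_smul_mul_mem_weightSixIdeal {k A : Type*} [CommRing k] [CommRing A] [Algebra k A]
    {d : ℕ} {ι : Type*} [Fintype ι] (z : Fin (d + 1) ⊕ ι → A)
    {β : Fin (d + 1) ⊕ ι → Fin (d + 1) ⊕ ι → k} (hβ : β (.inl 0) (.inl 0) = 0)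
    (hβ' : ∀ i : Fin d, β (.inl 0) (.inl i.succ) + β (.inl i.succ) (.inl 0) = 0) :
    ∑ s, ∑ t, β s t • (z s * z t) ∈ weightSixIdeal z := by
  have hz (s) : z s ∈ Ideal.span (Set.range z) := Ideal.subset_span (Set.mem_range_self s)
  have inr_mem (s j) : β s (.inr j) • (z s * z (.inr j)) ∈ weightSixIdeal z :=
    Submodule.smul_of_tower_mem _ _ (mul_inr_mem_weightSixIdeal (hz s) j)
  have inr_mem' (j t) : β (.inr j) t • (z (.inr j) * z t) ∈ weightSixIdeal z := by
    rw [mul_comm]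
    exact Submodule.smul_of_tower_mem _ _ (mul_inr_mem_weightSixIdeal (hz t) j)
  have succ_mem (i j : Fin d) : β (.inl i.succ) (.inl j.succ) •
      (z (.inl i.succ) * z (.inl j.succ)) ∈ weightSixIdeal z :=
    Submodule.smul_of_tower_mem _ _ (inl_succ_mul_inl_succ_mem_weightSixIdeal i j)
  have cross_terms : ∑ i : Fin d, β (.inl 0) (.inl i.succ) • (z (.inl 0) * z (.inl i.succ)) +
      ∑ i : Fin d, β (.inl i.succ) (.inl 0) • (z (.inl i.succ) * z (.inl 0)) = 0 := by
    simp_rw [mul_comm _ (z (.inl 0)), ← Finset.sum_add_distrib, ← add_smul, hβ', zero_smul,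
      Finset.sum_const_zero]
  convert! add_mem (add_mem
    (sum_mem (t := .univ) fun i _ ↦ sum_mem (t := .univ) fun j _ ↦ succ_mem i j)
    (sum_mem (t := .univ) fun s _ ↦ sum_mem (t := .univ) fun j _ ↦ inr_mem s j))
    (sum_mem (t := .univ) fun j _ ↦ sum_mem (t := .univ) fun i _ ↦ inr_mem' j (.inl i)) using 1
  simp only [Fintype.sum_sum_type, Fin.sum_univ_succ, hβ, zero_smul, zero_add,
    Finset.sum_add_distrib]
  linear_combination cross_terms

end QuadraticChangeOfVariables

section LinearChangeOfVariables

open MvPowerSeries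

variable {σ τ k : Type*} [Field k] (p : ℕ) [Fact p.Prime] [CharP k p]

theorem exists_surjective_algHom_truncX_eq_sum_smul [Finite σ] [Fintype τ]
    (b : Module.Basis τ k (σ → k)) (e : ℕ) :
    ∃ φ : PowTrunc σ k (p ^ e) →ₐ[k] PowTrunc τ k (p ^ e), Function.Surjective φ ∧
      ∀ i, φ (truncX k (p ^ e) i) = ∑ t, b t i • truncX k (p ^ e) t := by
  classical
  have := Fintype.ofFinite σ
  obtain ⟨φ, hφ⟩ := exists_algHom_truncX_eq (k := k) (q := p ^ e)
    (w := fun i : σ ↦ ∑ t, b t i • truncX k (p ^ e) t) fun i ↦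
      pow_eq_zero_of_mem_span_range_truncX p (sum_mem fun t _ ↦
        Submodule.smul_of_tower_mem _ _ (Ideal.subset_span (Set.mem_range_self t)))
  have sum_coord_mul (s t) : ∑ i, b.coord t (Pi.single i 1) * b s i = if s = t then 1 else 0 := by
    conv_rhs => rw [← Finsupp.single_apply, ← b.repr_self s, ← b.coord_apply, pi_eq_sum_univ' (b s)]
    simp only [map_sum, map_smul, smul_eq_mul, mul_comm]
  refine ⟨φ, surjective_of_truncX_mem_range φ fun t ↦
    ⟨∑ i, b.coord t (Pi.single i 1) • truncX k (p ^ e) i, ?_⟩, hφ⟩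
  calc
    φ (∑ i, b.coord t (Pi.single i 1) • truncX k (p ^ e) i)
      = ∑ s, (∑ i, b.coord t (Pi.single i 1) * b s i) • truncX k (p ^ e) s := by
        simp_rw [map_sum, map_smul, hφ, Finset.smul_sum, smul_smul, Finset.sum_smul]
        exact Finset.sum_comm
    _ = truncX k (p ^ e) t := by
        simp_rw [sum_coord_mul, ite_smul, one_smul, zero_smul, Finset.sum_ite_eq', Finset.mem_univ,
          if_true]

theorem map_mkₐ_mem_span_range_truncX_pow {f : MvPowerSeries σ k} {r : ℕ} {q q' : ℕ}
    {φ : PowTrunc σ k q →ₐ[k] PowTrunc τ k q'}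
    (hφ : ∀ i, φ (truncX k q i) ∈ Ideal.span (Set.range (truncX k q')))
    (hf : f ∈ Ideal.span (Set.range X) ^ r) :
    φ (Ideal.Quotient.mkₐ k _ f) ∈ Ideal.span (Set.range (truncX k q')) ^ r := by
  have hle : (Ideal.span (Set.range X)).map (φ.comp (Ideal.Quotient.mkₐ k (varPowIdeal σ k q))) ≤
      Ideal.span (Set.range (truncX k q')) := by
    rw [Ideal.map_le_iff_le_comap, Ideal.span_le]
    rintro _ ⟨i, rfl⟩
    exact hφ i
  refine Ideal.pow_right_mono hle r ?_
  rw [← Ideal.map_pow]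
  exact Ideal.mem_map_of_mem _ hf

theorem exists_surjective_algHom_mkₐ_mem_weightSixIdeal [IsAlgClosed k] [Fintype σ] {d m : ℕ}
    (hσ : Fintype.card σ = d + m + 2) (e : ℕ) {f : MvPowerSeries σ k}
    (hf : f ∈ Ideal.span (Set.range X) ^ 2) :
    ∃ φ : PowTrunc σ k (p ^ e) →ₐ[k] PowTrunc (Fin (d + 1) ⊕ Fin (m + 1)) k (p ^ e),
      Function.Surjective φ ∧
      (∀ i, φ (truncX k (p ^ e) i) ∈ Ideal.span (Set.range (truncX k (p ^ e)))) ∧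
      φ (Ideal.Quotient.mkₐ k _ f) ∈ weightSixIdeal (truncX k (p ^ e)) := by
  classical
  obtain ⟨α, hα⟩ := exists_sub_sum_smul_X_mul_X_mem_cube hf
  obtain ⟨b, hb, hb'⟩ := exists_basis_isotropic (d := d) (m := m) (V := σ → k) (by simpa using hσ)
    (Matrix.toBilin' α)
  obtain ⟨φ, hsurj, hφ⟩ := exists_surjective_algHom_truncX_eq_sum_smul p b e
  have hφ_mem (i) : φ (truncX k (p ^ e) i) ∈ Ideal.span (Set.range (truncX k (p ^ e))) := by
    rw [hφ]
    exact sum_mem fun t _ ↦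
      Submodule.smul_of_tower_mem _ _ (Ideal.subset_span (Set.mem_range_self t))
  have quadratic_part_mem :
      φ (Ideal.Quotient.mkₐ k _ (∑ i, ∑ j, α i j • (X i * X j))) ∈
        weightSixIdeal (truncX k (p ^ e)) := by
    have := sum_sum_smul_mul_mem_weightSixIdeal (truncX k (p ^ e))
      (β := fun s t ↦ Matrix.toBilin' α (b s) (b t)) hb hb'
    simp only [← sum_sum_smul_mul_eq_sum_sum_toBilin'_smul, ← hφ] at this
    simp only [map_sum, map_smul, map_mul]
    exact this
  refine ⟨φ, hsurj, hφ_mem, ?_⟩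
  rw [← sub_add_cancel f (∑ i, ∑ j, α i j • (X i * X j)), map_add, map_add]
  exact add_mem (span_range_cube_le_weightSixIdeal _
    (map_mkₐ_mem_span_range_truncX_pow hφ_mem hα)) quadratic_part_mem

theorem hilbertKunz_cuspForm_le_hilbertKunz [IsAlgClosed k] {d m : ℕ}
    {f : Fin (m + 2) → MvPowerSeries (Fin (d + (m + 2))) k}
    (hf : ∀ i, f i ∈ Ideal.span (Set.range X) ^ 2) (e : ℕ) :
    hilbertKunz (Ideal.span {cuspForm (X : Fin (d + 1) → MvPowerSeries (Fin (d + 1)) k)}) (p ^ e) ≤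
      hilbertKunz (Ideal.span (Set.range f)) (p ^ e) := by
  have : Infinite k := IsAlgClosed.instInfinite
  obtain ⟨φ, hsurj, hφ_mem, hweight⟩ := exists_surjective_algHom_mkₐ_mem_weightSixIdeal (d := d)
    (m := m) p (by simp [add_assoc]) e (hf 0)
  have hle := finrank_quotient_cuspForm_truncX_le p
    (G := fun j ↦ φ (Ideal.Quotient.mkₐ k (varPowIdeal _ k (p ^ e)) (f j))) hweight
    fun j ↦ map_mkₐ_mem_span_range_truncX_pow hφ_mem (hf j.succ)
  rw [hilbertKunz_eq_finrank_quotient_map, hilbertKunz_eq_finrank_quotient_map, Ideal.map_span,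
    Ideal.map_span, Set.image_singleton, map_cuspForm, ← Set.range_comp]
  refine hle.trans (finrank_quotient_le_of_surjective φ hsurj ?_)
  rw [Ideal.span_le]
  rintro _ ⟨j, rfl⟩
  exact Ideal.subset_span (Set.mem_range_self j)

end LinearChangeOfVariables

section Reduction

open MvPowerSeries Filter

theorem ne_zero_of_isWeaklyRegular_singleton {R : Type*} [CommRing R] [Nontrivial R] {r : R}
    (hr : RingTheory.Sequence.IsWeaklyRegular R [r]) : r ≠ 0 := by
  rintro rfl
  rw [RingTheory.Sequence.isWeaklyRegular_singleton_iff] at hr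
  exact hr.ne one_ne_zero (by simp)

theorem reduction_to_hypersurface_general (p : ℕ) [Fact p.Prime] {k : Type*} [Field k]
    [IsAlgClosed k] [CharP k p] {d ℓ : ℕ} (hℓ : 1 ≤ ℓ) {f : Fin ℓ → MvPowerSeries (Fin (d + ℓ)) k}
    (hf : ∀ i, f i ∈ Ideal.span (Set.range X) ^ 2)
    (hreg : RingTheory.Sequence.IsRegular (MvPowerSeries (Fin (d + ℓ)) k) (List.ofFn f))
    (hnotA1 : ¬Nonempty ((MvPowerSeries (Fin (d + ℓ)) k ⧸ Ideal.span (Set.range f)) ≃+*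
      (MvPowerSeries (Fin (d + 1)) k ⧸ Ideal.span {A1ps k d}))) :
    ∃ F : MvPowerSeries (Fin (d + 1)) k, F ≠ 0 ∧ F ∈ Ideal.span (Set.range X) ^ 2 ∧
      ¬Nonempty ((MvPowerSeries (Fin (d + 1)) k ⧸ Ideal.span {F}) ≃+*
        (MvPowerSeries (Fin (d + 1)) k ⧸ Ideal.span {A1ps k d})) ∧
      liminf (fun e : ℕ ↦
          (hilbertKunz (Ideal.span (Set.range f)) (p ^ e) : ℝ) / (p : ℝ) ^ (d * e)) atTop ≥
        limsup (fun e : ℕ ↦ (hilbertKunz (Ideal.span {F}) (p ^ e) : ℝ) / (p : ℝ) ^ (d * e))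
          atTop := by
  match ℓ, hℓ with
  | 1, _ =>
    have range_f : Set.range f = {f 0} := Set.range_unique
    have hf0 : f 0 ≠ 0 := ne_zero_of_isWeaklyRegular_singleton (by simpa using hreg.1)
    exact ⟨f 0, hf0, hf 0, range_f ▸ hnotA1,
      limsup_hilbertKunz_le_liminf_hilbertKunz p hreg fun e ↦ by rw [range_f]⟩
  | m + 2, _ =>
    exact ⟨cuspForm X, cuspForm_X_ne_zero, cuspForm_mem_sq fun i ↦ Ideal.subset_span ⟨i, rfl⟩,
      not_nonempty_quotient_cuspForm_ringEquiv_quotient_A1ps d,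
      limsup_hilbertKunz_le_liminf_hilbertKunz p hreg (hilbertKunz_cuspForm_le_hilbertKunz p hf)⟩

end Reduction

/-- Reduction from complete intersections to hypersurfaces: a singular complete
intersection `R = k[[x_1,…,x_n]]/(f_1,…,f_ℓ)` of dimension `d = n − ℓ ≥ 2` that is not
isomorphic to the `A₁` singularity has Hilbert–Kunz multiplicity at least that of some
singular hypersurface `k[[y_0,…,y_d]]/(F)` of the same dimension which is also not
isomorphic to the `A₁` singularity. -/
theorem reduction_to_hypersurface
    (p : ℕ) (hp : p.Prime) (k : Type*) [Field k] [IsAlgClosed k] [CharP k p]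
    (n ℓ : ℕ) (hn : 1 ≤ n) (hℓ : 1 ≤ ℓ) (hd : 2 ≤ n - ℓ)
    (f : Fin ℓ → MvPowerSeries (Fin n) k)
    (hf : ∀ i : Fin ℓ, f i ∈ (Ideal.span
      (Set.range (MvPowerSeries.X : Fin n → MvPowerSeries (Fin n) k))) ^ 2)
    (hreg : RingTheory.Sequence.IsRegular (MvPowerSeries (Fin n) k) (List.ofFn f))
    (hnotA1 : ¬ Nonempty ((MvPowerSeries (Fin n) k ⧸
        (Ideal.span (Set.range f) : Ideal (MvPowerSeries (Fin n) k))) ≃+*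
      (MvPowerSeries (Fin (n - ℓ + 1)) k ⧸
        (Ideal.span {A1ps k (n - ℓ)} :
          Ideal (MvPowerSeries (Fin (n - ℓ + 1)) k))))) :
    ∃ F : MvPowerSeries (Fin (n - ℓ + 1)) k,
      F ≠ 0 ∧
      F ∈ (Ideal.span (Set.range
        (MvPowerSeries.X : Fin (n - ℓ + 1) → MvPowerSeries (Fin (n - ℓ + 1)) k))) ^ 2 ∧
      ¬ Nonempty ((MvPowerSeries (Fin (n - ℓ + 1)) k ⧸
          (Ideal.span {F} : Ideal (MvPowerSeries (Fin (n - ℓ + 1)) k))) ≃+*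
        (MvPowerSeries (Fin (n - ℓ + 1)) k ⧸
          (Ideal.span {A1ps k (n - ℓ)} :
            Ideal (MvPowerSeries (Fin (n - ℓ + 1)) k)))) ∧
      Filter.liminf
        (fun e : ℕ =>
          (Module.finrank k
            (MvPowerSeries (Fin n) k ⧸
              Ideal.span (Set.range f ∪ Set.range
                (fun i : Fin n =>
                  (MvPowerSeries.X i : MvPowerSeries (Fin n) k) ^ p ^ e))) : ℝ) /
            (p : ℝ) ^ ((n - ℓ) * e))
        Filter.atTop ≥
      Filter.limsup
        (fun e : ℕ =>
          (Module.finrank k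
            (MvPowerSeries (Fin (n - ℓ + 1)) k ⧸
              Ideal.span ({F} ∪ Set.range
                (fun i : Fin (n - ℓ + 1) =>
                  (MvPowerSeries.X i :
                    MvPowerSeries (Fin (n - ℓ + 1)) k) ^ p ^ e))) : ℝ) /
            (p : ℝ) ^ ((n - ℓ) * e))
        Filter.atTop := by
  have := Fact.mk hp
  obtain ⟨d, rfl⟩ : ∃ d, n = d + ℓ := ⟨n - ℓ, by omega⟩
  rw [Nat.add_sub_cancel] at hnotA1 ⊢
  simpa only [hilbertKunz_span] using reduction_to_hypersurface_general p hℓ hf hreg hnotA1
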